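/- Every Coxeter–Knuth equivalence class of reduced words for a permutation w contains exactly one Yamanouchi reduced word. -/

import Mathlib

open List

namespace EG

/-! ## Words, permutations, and reduced words.

A word is a list of positive natural numbers `(ρ_ℓ, …, ρ_1)`, read left to right,
representing the product of simple transpositions `s_{ρ_ℓ} ⋯ s_{ρ_1}`. -/

/-- The permutation of `ℕ` represented by a word. -/
def toPerm (ρ : List ℕ) : Equiv.Perm ℕ :=
  (ρ.map fun i => Equiv.swap i (i + 1)).prod

/-- `ρ` is a reduced word: its letters are positive, and no shorter word represents
the same permutation. -/
def IsReducedWord (ρ : List ℕ) : Prop :=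
  (∀ i ∈ ρ, 1 ≤ i) ∧
    ∀ σ : List ℕ, (∀ i ∈ σ, 1 ≤ i) → toPerm σ = toPerm ρ → ρ.length ≤ σ.length

/-- `ρ` is a reduced word for the permutation `w`. -/
def ReducedWordFor (ρ : List ℕ) (w : Equiv.Perm ℕ) : Prop :=
  IsReducedWord ρ ∧ toPerm ρ = w

/-! ## Elementary Coxeter–Knuth relations. -/

/-- The elementary Coxeter–Knuth move on a consecutive triple
`(a, b, c) = (ρ_{i+1}, ρ_i, ρ_{i−1})`. -/
def ckTriple (a b c : ℕ) : ℕ × ℕ × ℕ :=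
  if a = c then (b, a, b)
  else if (c > a ∧ a > b) ∨ (c < a ∧ a < b) then (a, c, b)
  else if (a > c ∧ c > b) ∨ (a < c ∧ c < b) then (b, a, c)
  else (a, b, c)

/-- The elementary Coxeter–Knuth relation `𝔡_i`, acting on the letters
`ρ_{i+1} ρ_i ρ_{i−1}` of a word `ρ = (ρ_ℓ, …, ρ_1)` (indexed from the right). -/
def ckMove (i : ℕ) (ρ : List ℕ) : List ℕ :=
  if 2 ≤ i ∧ i + 1 ≤ ρ.length then
    let p := ρ.length - i - 1
    let t := ckTriple (ρ.getD p 0) (ρ.getD (p + 1) 0) (ρ.getD (p + 2) 0)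
    ((ρ.set p t.1).set (p + 1) t.2.1).set (p + 2) t.2.2
  else ρ

/-- Two words are Coxeter–Knuth equivalent if one is obtained from the other by a
finite sequence of elementary Coxeter–Knuth relations. -/
def CKEquiv (ρ σ : List ℕ) : Prop :=
  ∃ ms : List ℕ, σ = ms.foldl (fun w i => ckMove i w) ρ

/-! ## Run decompositions and descent tableaux. -/

/-- Split a list into maximal blocks, breaking between consecutive letters `a`, `b`
whenever `brk a b` holds. -/
def splitWhen (brk : ℕ → ℕ → Bool) : List ℕ → List (List ℕ)
  | [] => []
  | [a] => [[a]]
  | a :: b :: rest =>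
    match splitWhen brk (b :: rest) with
    | r :: rs => if brk a b then [a] :: r :: rs else (a :: r) :: rs
    | [] => [[a]]

/-- The run decomposition of a word into maximal strictly increasing runs, listed
left to right (so the list is `[ρ⁽ᵏ⁾, …, ρ⁽¹⁾]`, with `ρ⁽¹⁾` the final run). -/
def runs (ρ : List ℕ) : List (List ℕ) := splitWhen (fun a b => decide (b ≤ a)) ρ

/-- The rows of the descent tableau `𝔻(ρ)`, listed bottom to top:
`[ρ⁽¹⁾, …, ρ⁽ᵏ⁾]`. -/
def rowsOf (ρ : List ℕ) : List (List ℕ) := (runs ρ).reverse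

/-- The row reading word of a tableau whose rows are listed bottom to top:
read rows left to right, starting with the top row. -/
def wordOf (R : List (List ℕ)) : List ℕ := R.reverse.flatten

/-- The descent composition `Des(ρ) = (|ρ⁽¹⁾|, …, |ρ⁽ᵏ⁾|)`. -/
def DesComp (ρ : List ℕ) : List ℕ := (rowsOf ρ).map List.length

/-- A list of rows (bottom to top) is an increasing Young tableau of partition shape:
rows strictly increase left to right, shape is a partition, and columns strictly
increase bottom to top. -/
def IsIncreasingYoungRows (R : List (List ℕ)) : Prop :=
  (∀ r ∈ R, r.Chain' (· < ·)) ∧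
    R.Chain' (fun lo hi => hi.length ≤ lo.length ∧
      ∀ j < hi.length, lo.getD j 0 < hi.getD j 0)

/-! ## The drop map on a pair of increasing rows. -/

/-- Increment the first `n` letters of a list by `1`. -/
def incFirst : ℕ → List ℕ → List ℕ
  | 0, l => l
  | _ + 1, [] => []
  | n + 1, a :: l => (a + 1) :: incFirst n l

/-- Decrement the first `n` letters of a list by `1`. -/
def decFirst : ℕ → List ℕ → List ℕ
  | 0, l => l
  | _ + 1, [] => []
  | n + 1, a :: l => (a - 1) :: decFirst n l

/-- `bCount t1 i [s_i, s_{i+1}, …]` is the largest `b` with `t1 = s_j + j` for all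
`i ≤ j < i + b`. -/
def bCount (t1 : ℕ) : ℕ → List ℕ → ℕ
  | _, [] => 0
  | i, s :: rest => if t1 = s + i then bCount t1 (i + 1) rest + 1 else 0

/-- Index of the first failure `τ_j ≤ σ_j` in the drop alignment of `σ` below `τ`. -/
def failIdx (τ σ : List ℕ) : Option ℕ :=
  (τ.zip σ).findIdx? (fun p => decide (p.1 ≤ p.2))

/-- Fueled computation of the drop of the row `σ` below the row `τ`, returning the
new pair (top row, bottom row). -/
def dropPairAux : ℕ → List ℕ → List ℕ → List ℕ × List ℕ
  | 0, τ, σ => (τ, σ)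
  | fuel + 1, τ, σ =>
    match failIdx τ σ with
    | none =>
      if σ.length < τ.length then (τ.take σ.length, σ ++ τ.drop σ.length)
      else (τ, σ)
    | some j =>
      let x := τ.getD j 0
      let τr := τ.drop (j + 1)
      let σr := σ.drop j
      let res := dropPairAux fuel τr σr
      let l1 := (failIdx τr σr).getD τr.length
      let b := if l1 = 0 then 0
               else if x + 1 = τr.headD 0 then bCount (τr.headD 0) 1 (σr.take l1) else 0
      (τ.take j ++ res.1, σ.take j ++ x :: incFirst b res.2)

/-- The drop of the row `σ` below the row `τ`: the pair (new top row, new bottom row). -/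
def dropPair (τ σ : List ℕ) : List ℕ × List ℕ := dropPairAux (τ.length + 1) τ σ

/-- The word `drop(τσ)`. -/
def dropW (τ σ : List ℕ) : List ℕ := (dropPair τ σ).1 ++ (dropPair τ σ).2

/-- Apply `drop` to rows `i` and `i+1` (1-indexed from the bottom) of a list of rows. -/
def dropAt : ℕ → List (List ℕ) → List (List ℕ)
  | 1, σr :: τr :: rest => (dropPair τr σr).2 :: (dropPair τr σr).1 :: rest
  | n + 2, r :: R => r :: dropAt (n + 1) R
  | _, R => R

/-- The map `drop_i` on words: replace the runs `ρ⁽ⁱ⁺¹⁾ ρ⁽ⁱ⁾` of the run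
decomposition by `drop(ρ⁽ⁱ⁺¹⁾ ρ⁽ⁱ⁾)`. -/
def dropWordAt (i : ℕ) (ρ : List ℕ) : List ℕ := wordOf (dropAt i (rowsOf ρ))

/-- One sweep of all the maps `drop_i`. -/
def sweepDrop (ρ : List ℕ) : List ℕ :=
  (List.range (runs ρ).length).foldl (fun w i => dropWordAt (i + 1) w) ρ

/-- The drop `drop(ρ)` of a word: repeatedly apply the maps `drop_i` until reaching
the fixed point (an increasing Young tableau). -/
def dropFull (ρ : List ℕ) : List ℕ := sweepDrop^[ρ.length * ρ.length + 1] ρ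

/-! ## The lift map on a pair of increasing rows. -/

/-- `bCount2 x i τblk σblk` is the largest `b` with `τ_j = σ_j = x + j` for all
`i ≤ j < i + b`. -/
def bCount2 (x : ℕ) : ℕ → List ℕ → List ℕ → ℕ
  | i, t :: ts, s :: ss =>
      if t = x + i ∧ s = x + i then bCount2 x (i + 1) ts ss + 1 else 0
  | _, _, _ => 0

/-- Index of the first failure (from the right) in the lift alignment of `τ` above
`σ`: here both rows are given reversed. -/
def liftFailIdx (τR σR : List ℕ) : Option ℕ :=
  (τR.zip σR).findIdx? (fun p => decide (p.1 < p.2))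

/-- Fueled computation of the lift of the row `τ` above the row `σ`, on reversed
rows; returns the new (top row, bottom row), reversed. -/
def liftPairAuxR : ℕ → List ℕ → List ℕ → List ℕ × List ℕ
  | 0, τR, σR => (τR, σR)
  | fuel + 1, τR, σR =>
    match liftFailIdx τR σR with
    | none => (τR, σR)
    | some j =>
      let x := σR.getD j 0
      let τr := τR.drop j
      let σr := σR.drop (j + 1)
      let res := liftPairAuxR fuel τr σr
      let τblk := (τR.take j).reverse
      let σblk := (σR.take j).reverse
      let b := if σblk.headD 0 = x + 1 then bCount2 x 1 τblk σblk else 0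
      (τR.take j ++ x :: res.1, (decFirst b σblk).reverse ++ res.2)

/-- Check that the lift alignment leaves no unmatched letters of `σ` (no letter of
`σ` other than the `x_j`'s lacks a letter of `τ` above it); when some letter is
left over, the lift acts trivially. -/
def liftOkAux : ℕ → List ℕ → List ℕ → Bool
  | 0, _, _ => true
  | fuel + 1, τR, σR =>
    match liftFailIdx τR σR with
    | none => σR.length ≤ τR.length
    | some j => liftOkAux fuel (τR.drop j) (σR.drop (j + 1))

/-- The lift of the row `τ` above the row `σ`: the pair (new top row, new bottom row). -/
def liftPair (τ σ : List ℕ) : List ℕ × List ℕ :=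
  if liftOkAux (σ.length + 1) τ.reverse σ.reverse then
    let r := liftPairAuxR (σ.length + 1) τ.reverse σ.reverse
    (r.1.reverse, r.2.reverse)
  else (τ, σ)

/-- The word `lift(τσ)`. -/
def liftW (τ σ : List ℕ) : List ℕ := (liftPair τ σ).1 ++ (liftPair τ σ).2

/-- Apply `lift` to rows `i` and `i+1` (1-indexed from the bottom) of a list of rows. -/
def liftAt : ℕ → List (List ℕ) → List (List ℕ)
  | 1, σr :: τr :: rest => (liftPair τr σr).2 :: (liftPair τr σr).1 :: rest
  | n + 2, r :: R => r :: liftAt (n + 1) R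
  | _, R => R

/-- The lifting sequence `lift_{[i,j]} = lift_j ∘ ⋯ ∘ lift_i`. -/
def liftSeq (i j : ℕ) (T : List (List ℕ)) : List (List ℕ) :=
  (List.range' i (j + 1 - i)).foldl (fun t k => liftAt k t) T

/-- Fueled check that `lift_i, lift_{i+1}, …` all act faithfully, for `n` steps. -/
def faithfulAux : ℕ → ℕ → List (List ℕ) → Bool
  | 0, _, _ => false
  | n + 1, i, T =>
    let T' := liftAt i T
    if T' = T then false
    else if n = 0 then true
    else faithfulAux n (i + 1) T'

/-- The lifting sequence `lift_{[i,j]}` acts faithfully on `T`. -/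
def faithfulSeq (i j : ℕ) (T : List (List ℕ)) : Bool :=
  if i ≤ j then faithfulAux (j + 1 - i) i T else false

/-- Find the canonical move: the maximal `j` admitting some `i ≤ j` with
`lift_{[i,j]}` faithful, together with the minimal such `i`. -/
def findMove (T : List (List ℕ)) : Option (ℕ × ℕ) :=
  (List.range (T.length + 1)).reverse.findSome? (fun j =>
    ((List.range' 1 j).find? (fun i => faithfulSeq i j T)).map (fun i => (i, j)))

/-- Fueled canonical lifting loop. -/
def liftCanonAux : ℕ → List (List ℕ) → List (List ℕ)
  | 0, T => T
  | fuel + 1, T =>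
    match findMove T with
    | none => T
    | some ij => liftCanonAux fuel (liftSeq ij.1 ij.2 T)

/-- The canonical lifting algorithm applied to a tableau (rows bottom to top). -/
def liftCanon (T : List (List ℕ)) : List (List ℕ) :=
  liftCanonAux (T.flatten.length * T.length + 1) T

/-- The word `lift(ρ)`: the row reading word of the canonical lift of `𝔻(ρ)`. -/
def liftWord (ρ : List ℕ) : List ℕ := wordOf (liftCanon (rowsOf ρ))

/-! ## Weak descent compositions. -/

/-- From the list of minima `[r_k, …, r_1]` of the runs (topmost first), compute
`[r̂_k, …, r̂_1]` where `r̂_k = r_k` and `r̂_i = min (r_i, r̂_{i+1} − 1)`. -/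
def hatMins (L : List ℤ) : List ℤ :=
  (L.foldl (fun (acc : List ℤ × Option ℤ) r =>
    let v := match acc.2 with
      | none => r
      | some p => min r (p - 1)
    (acc.1 ++ [v], some v)) ([], none)).1

/-- Build the weak composition with value `lens_i` in position `hs_i` and `0`
elsewhere. -/
def buildWeakComp (hs : List ℤ) (lens : List ℕ) : List ℕ :=
  (List.range (hs.headD 0).toNat).map (fun p =>
    match (hs.zip lens).find? (fun q => decide (q.1 = (p : ℤ) + 1)) with
    | some q => q.2
    | none => 0)

/-- The weak descent composition determined by the minima and lengths of the runs
(topmost run first); `none` means virtual. -/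
def desFromBlocks (mins : List ℤ) (lens : List ℕ) : Option (List ℕ) :=
  let hs := hatMins mins
  if hs = [] then some []
  else if hs.getLastD 0 ≤ 0 then none
  else some (buildWeakComp hs lens)

/-- The weak descent composition `des(ρ)` of a word; `none` means `ρ` is virtual. -/
def desWord (ρ : List ℕ) : Option (List ℕ) :=
  desFromBlocks ((runs ρ).map (fun r => ((r.headD 0 : ℕ) : ℤ)))
    ((runs ρ).map List.length)

/-- Prefix-sum dominance of weak compositions: `domLe a b` means
`a_1 + ⋯ + a_k ≤ b_1 + ⋯ + b_k` for all `k` (i.e. `b ≥ a`). -/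
def domLe (a b : List ℕ) : Prop := ∀ k, ((a.take k).sum ≤ (b.take k).sum)

/-- A reduced word is Yamanouchi if it is non-virtual and its weak descent
composition is dominated by that of every non-virtual Coxeter–Knuth equivalent word. -/
def IsYam (ρ : List ℕ) : Prop :=
  IsReducedWord ρ ∧ ∃ d, desWord ρ = some d ∧
    ∀ σ e, CKEquiv ρ σ → desWord σ = some e → domLe d e

/-! ## Quasisymmetric functions, slide polynomials, and generating functions.

We model formal power series in variables `x_1, x_2, …` (indexed by `ℕ`, with
variable `i` standing for `x_{i+1}`) as functions `(ℕ →₀ ℕ) → ℤ` recording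
coefficients of monomials. -/

/-- `β` refines `α`: `β` splits into consecutive blocks with sums the parts of `α`. -/
def Refines (β α : List ℕ) : Prop :=
  ∃ blocks : List (List ℕ), blocks.flatten = β ∧
    List.Forall₂ (fun blk a => blk.sum = a) blocks α

/-- The flattening of a weak composition given as a finitely supported exponent
vector: the list of its nonzero values, in order. -/
def flatOf (b : ℕ →₀ ℕ) : List ℕ :=
  ((List.range (b.support.sup id + 1)).map b).filter (fun x => decide (x ≠ 0))

open Classical in
/-- The fundamental quasisymmetric function `F_α`. -/
noncomputable def Fqs (α : List ℕ) : (ℕ →₀ ℕ) → ℤ :=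
  fun b => if Refines (flatOf b) α then 1 else 0

open Classical in
/-- The fundamental slide polynomial `𝔉_a` of a weak composition `a`. -/
noncomputable def FSlide (a : List ℕ) : (ℕ →₀ ℕ) → ℤ :=
  fun b =>
    if (∀ i, a.length ≤ i → b i = 0) ∧
       (∀ k, (a.take k).sum ≤ ∑ i ∈ Finset.range k, b i) ∧
       Refines (flatOf b) (a.filter (fun x => decide (x ≠ 0))) then 1 else 0

/-- `𝔉` extended to virtual indices by `𝔉_∅ = 0`. -/
noncomputable def FSlideO : Option (List ℕ) → (ℕ →₀ ℕ) → ℤ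
  | none => 0
  | some a => FSlide a

/-- The Stanley symmetric function `S_w`. -/
noncomputable def StanleySym (w : Equiv.Perm ℕ) : (ℕ →₀ ℕ) → ℤ :=
  ∑ᶠ ρ ∈ {ρ : List ℕ | ReducedWordFor ρ w}, Fqs (DesComp ρ)

/-- The Schubert polynomial `𝔖_w`. -/
noncomputable def Schubert (w : Equiv.Perm ℕ) : (ℕ →₀ ℕ) → ℤ :=
  ∑ᶠ ρ ∈ {ρ : List ℕ | ReducedWordFor ρ w}, FSlideO (desWord ρ)

/-! ## Standard Young tableaux and Schur functions. -/

/-- The (bottom-to-top) row index of the row of `T` containing the entry `e`. -/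
def rowOf (T : List (List ℕ)) (e : ℕ) : ℕ := T.findIdx (fun r => r.contains e)

/-- The column index of the entry `e` in `T`. -/
def colOf (T : List (List ℕ)) (e : ℕ) : ℕ :=
  (T.getD (rowOf T e) []).findIdx (fun z => z == e)

/-- `T` (rows listed bottom to top) is a standard Young tableau. -/
def IsSYT (T : List (List ℕ)) : Prop :=
  (∀ r ∈ T, r.Chain' (· < ·)) ∧
    T.Chain' (fun lo hi => hi.length ≤ lo.length ∧
      ∀ j < hi.length, lo.getD j 0 < hi.getD j 0) ∧
    [] ∉ T ∧
    T.flatten.Perm (List.range' 1 T.flatten.length)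

/-- The descent composition of a standard Young tableau: `i` is a descent when
`i+1` lies weakly left of `i`. -/
def sytDes (T : List (List ℕ)) : List ℕ :=
  (splitWhen (fun a _ => decide (colOf T (a + 1) ≤ colOf T a))
    (List.range' 1 T.flatten.length)).map List.length

/-- The Schur function `s_λ`, for a partition `λ` given as the list of row lengths
bottom to top. -/
noncomputable def Schur (lam : List ℕ) : (ℕ →₀ ℕ) → ℤ :=
  ∑ᶠ T ∈ {T : List (List ℕ) | IsSYT T ∧ T.map List.length = lam}, Fqs (sytDes T)

/-! ## Standard key tableaux and Demazure characters. -/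

/-- `T` is a standard key tableau of shape the weak composition `a`: rows (listed
bottom to top, with row `i` of length `a_i`, possibly `0`) strictly decrease left to
right, the entries are `1, …, |a|`, and whenever an entry `i` lies above an entry
`k` in the same column with `i < k`, some entry `j` right of `k` satisfies `i < j`. -/
def IsSKT (a : List ℕ) (T : List (List ℕ)) : Prop :=
  T.map List.length = a ∧
    (∀ r ∈ T, r.Chain' (· > ·)) ∧
    T.flatten.Perm (List.range' 1 a.sum) ∧
    ∀ lo hi, lo < hi → hi < T.length →
      ∀ c, c < (T.getD hi []).length → c < (T.getD lo []).length →
        (T.getD hi []).getD c 0 < (T.getD lo []).getD c 0 →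
        ∃ c', c < c' ∧ c' < (T.getD lo []).length ∧
          (T.getD hi []).getD c 0 < (T.getD lo []).getD c' 0

/-- The runs of the word `n ⋯ 2 1` determined by the descents of a standard key
tableau `T` (where `i` is a descent when `i+1` lies weakly right of `i`). -/
def sktRuns (T : List (List ℕ)) : List (List ℕ) :=
  splitWhen (fun _ b => decide (colOf T b ≤ colOf T (b + 1)))
    ((List.range' 1 T.flatten.length).reverse)

/-- The minimal row (1-indexed from the bottom) among the cells of the entries of
`r` in `T`. -/
def minRow (T : List (List ℕ)) (r : List ℕ) : ℕ :=
  ((r.map (fun e => rowOf T e + 1)).min?).getD 0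

/-- The weak descent composition `des(T)` of a standard key tableau; `none` means
`T` is virtual. -/
def desSKT (T : List (List ℕ)) : Option (List ℕ) :=
  (desFromBlocks ((sktRuns T).map (fun r => ((minRow T r : ℕ) : ℤ)))
    ((sktRuns T).map List.length)).map
      (fun d => d ++ List.replicate (T.length - d.length) 0)

/-- The Demazure character (key polynomial) `κ_a`. -/
noncomputable def KeyPoly (a : List ℕ) : (ℕ →₀ ℕ) → ℤ :=
  ∑ᶠ T ∈ {T : List (List ℕ) | IsSKT a T}, FSlideO (desSKT T)

/-- `κ` extended to virtual indices by `κ_∅ = 0`. -/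
noncomputable def KeyPolyO : Option (List ℕ) → (ℕ →₀ ℕ) → ℤ
  | none => 0
  | some a => KeyPoly a

/-! ## Edelman–Greene insertion and weak insertion. -/

/-- Edelman–Greene insertion of `x` into a single row: either append `x`, or bump
the smallest entry exceeding `x` (suppressing the replacement when that entry is
`x+1` and `x` already occurs in the row). -/
def eginsRow (x : ℕ) (row : List ℕ) : List ℕ × Option ℕ :=
  match row.findIdx? (fun z => decide (x < z)) with
  | none => (row ++ [x], none)
  | some j =>
    let y := row.getD j 0
    (if y = x + 1 ∧ row.contains x then row else row.set j x, some y)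

/-- Edelman–Greene insertion of `x` into a tableau (rows bottom to top). -/
def egins : ℕ → List (List ℕ) → List (List ℕ)
  | x, [] => [[x]]
  | x, row :: rest =>
    match eginsRow x row with
    | (r, none) => r :: rest
    | (r, some y) => r :: egins y rest

/-- The Edelman–Greene insertion tableau `P(ρ)` of a word. -/
def PEG (ρ : List ℕ) : List (List ℕ) := ρ.foldl (fun P x => egins x P) []

/-- One sweep of all the maps `drop_i` on a tableau (rows bottom to top). -/
def sweepDropT (T : List (List ℕ)) : List (List ℕ) :=
  (List.range T.length).foldl (fun t i => dropAt (i + 1) t) T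

/-- The drop of a tableau: repeatedly drop until reaching the increasing Young
tableau of the class. -/
def dropCanon (T : List (List ℕ)) : List (List ℕ) :=
  sweepDropT^[T.flatten.length * T.length + 1] T

/-- Weak insertion of the letter `x` into a Yamanouchi key tableau `P`:
`lift (drop P ← x)`. -/
def winsert (x : ℕ) (P : List (List ℕ)) : List (List ℕ) :=
  liftCanon (egins x (dropCanon P))

/-- The weak insertion tableau `P̃(ρ)` (rows bottom to top). -/
def Pweak (ρ : List ℕ) : List (List ℕ) := ρ.foldl (fun P x => winsert x P) []

/-- The Yamanouchi word of the Coxeter–Knuth class of `ρ`: the row reading word of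
`P̃(ρ)`. -/
def yamWord (ρ : List ℕ) : List ℕ := wordOf (Pweak ρ)

/-- The shape (weak composition) of the weak insertion tableau of the first `m`
letters of `ρ`. -/
def shapeAt (ρ : List ℕ) (m : ℕ) : List ℕ :=
  (desWord (wordOf (Pweak (ρ.take m)))).getD []

/-- Append the entry `e` at the end of row `j` (0-indexed from the bottom),
extending with empty rows as needed. -/
def placeEntry (Q : List (List ℕ)) (j e : ℕ) : List (List ℕ) :=
  let Q' := Q ++ List.replicate (j + 1 - Q.length) []
  Q'.set j (Q'.getD j [] ++ [e])

/-- The (0-indexed) row in which the shape grows from `aold` to `anew`. -/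
def growRow (aold anew : List ℕ) : ℕ :=
  ((List.range anew.length).find?
    (fun j => decide (aold.getD j 0 ≠ anew.getD j 0))).getD 0

/-- The weak recording tableau `Q̃(ρ)`: entry `i` is placed in the cell where the
shape grows at the step inserting `ρ_i` (entries are placed in decreasing order). -/
def Qweak (ρ : List ℕ) : List (List ℕ) :=
  (List.range ρ.length).foldl (fun Q m =>
    placeEntry Q (growRow (shapeAt ρ m) (shapeAt ρ (m + 1))) (ρ.length - m)) []

/-! ## Elementary weak dual equivalence involutions. -/

/-- Column reading order on entries: by column, and bottom to top within a column. -/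
def colKeyLe (T : List (List ℕ)) (x y : ℕ) : Bool :=
  decide (colOf T x < colOf T y ∨ (colOf T x = colOf T y ∧ rowOf T x ≤ rowOf T y))

/-- Sort three values by a boolean order. -/
def sort3 (le : ℕ → ℕ → Bool) (a b c : ℕ) : ℕ × ℕ × ℕ :=
  if le a b then
    if le b c then (a, b, c) else if le a c then (a, c, b) else (c, a, b)
  else
    if le a c then (b, a, c) else if le b c then (b, c, a) else (c, b, a)

/-- Relabel the entries `x, y, z` of `T` as `x', y', z'` respectively. -/
def relabel3 (T : List (List ℕ)) (x y z x' y' z' : ℕ) : List (List ℕ) :=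
  T.map (List.map (fun t =>
    if t = x then x' else if t = y then y' else if t = z then z' else t))

/-- The elementary weak dual equivalence involution `d̃_i` on standard key tableaux:
with `u, v, w` the cells of `i−1, i, i+1` in column reading order, if `u` and `w`
share a row and `v` does not, cycle the three entries so that `i` shares a row with
`i ± 1`; else if `v` holds `i+1` swap `i−1, i`; else if `v` holds `i−1` swap
`i, i+1`; otherwise fix `T`. -/
def wde (i : ℕ) (T : List (List ℕ)) : List (List ℕ) :=
  let s := sort3 (colKeyLe T) (i - 1) i (i + 1)
  let u := s.1
  let v := s.2.1
  let w := s.2.2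
  if rowOf T u = rowOf T w ∧ rowOf T v ≠ rowOf T u then
    let T1 := relabel3 T u v w w u v
    let T2 := relabel3 T u v w v w u
    if rowOf T1 i = rowOf T1 (i - 1) ∨ rowOf T1 i = rowOf T1 (i + 1) then T1 else T2
  else if v = i + 1 then relabel3 T (i - 1) i (i + 1) i (i - 1) (i + 1)
  else if v = i - 1 then relabel3 T (i - 1) i (i + 1) (i - 1) (i + 1) i
  else T

/-- Remove trailing zero parts of a weak composition (two weak compositions are
identified when they differ only in trailing zeros). -/
def trimZeros (a : List ℕ) : List ℕ :=
  (a.reverse.dropWhile (fun x => x == 0)).reverse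

/-- The transposition `s_i` acting on compositions by interchanging the parts in
positions `i` and `i+1` (1-indexed). -/
def swapParts (i : ℕ) (c : List ℕ) : List ℕ :=
  if 1 ≤ i ∧ i < c.length then
    (c.set (i - 1) (c.getD i 0)).set i (c.getD (i - 1) 0)
  else c

end EG
namespace YZ

/-- Coxeter--Knuth steps on integer words. -/
inductive Step : List ℤ → List ℤ → Prop
  | k1 (p s : List ℤ) (x y z : ℤ) (h1 : x < y) (h2 : y < z) :
      Step (p ++ y :: x :: z :: s) (p ++ y :: z :: x :: s)
  | k2 (p s : List ℤ) (x y z : ℤ) (h1 : x < y) (h2 : y < z) :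
      Step (p ++ x :: z :: y :: s) (p ++ z :: x :: y :: s)
  | br (p s : List ℤ) (x : ℤ) :
      Step (p ++ x :: (x + 1) :: x :: s) (p ++ (x + 1) :: x :: (x + 1) :: s)

def Eqv : List ℤ → List ℤ → Prop := Relation.EqvGen Step

theorem Eqv.refl (w : List ℤ) : Eqv w w := Relation.EqvGen.refl w
theorem Eqv.symm {w w' : List ℤ} (h : Eqv w w') : Eqv w' w := Relation.EqvGen.symm _ _ h
theorem Eqv.trans {a b c : List ℤ} (h : Eqv a b) (h' : Eqv b c) : Eqv a c :=
  Relation.EqvGen.trans _ _ _ h h'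
theorem Step.eqv {w w' : List ℤ} (h : Step w w') : Eqv w w' := Relation.EqvGen.rel _ _ h

/-- transport of an equivalence along a map compatible with steps -/
theorem Eqv.lift (f : List ℤ → List ℤ) (hf : ∀ a b, Step a b → Eqv (f a) (f b))
    {a b : List ℤ} (h : Eqv a b) : Eqv (f a) (f b) := by
  induction h with
  | rel a b h => exact hf a b h
  | refl a => exact Eqv.refl _
  | symm a b _ ih => exact ih.symm
  | trans a b c _ _ ih1 ih2 => exact ih1.trans ih2

theorem Eqv.ind {α : Sort*} (f : List ℤ → α) (hf : ∀ a b, Step a b → f a = f b)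
    {a b : List ℤ} (h : Eqv a b) : f a = f b := by
  induction h with
  | rel a b h => exact hf a b h
  | refl a => rfl
  | symm a b _ ih => exact ih.symm
  | trans a b c _ _ ih1 ih2 => exact ih1.trans ih2

theorem Eqv.ctx (q t : List ℤ) {a b : List ℤ} (h : Eqv a b) : Eqv (q ++ a ++ t) (q ++ b ++ t) := by
  refine Eqv.lift (fun w => q ++ w ++ t) ?_ h
  intro a b h
  apply Step.eqv
  cases h with
  | k1 p s x y z h1 h2 => simpa using Step.k1 (q ++ p) (s ++ t) x y z h1 h2
  | k2 p s x y z h1 h2 => simpa using Step.k2 (q ++ p) (s ++ t) x y z h1 h2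
  | br p s x => simpa using Step.br (q ++ p) (s ++ t) x

theorem Eqv.left (q : List ℤ) {a b : List ℤ} (h : Eqv a b) : Eqv (q ++ a) (q ++ b) := by
  simpa using h.ctx q []
theorem Eqv.right (t : List ℤ) {a b : List ℤ} (h : Eqv a b) : Eqv (a ++ t) (b ++ t) := by
  simpa using h.ctx [] t
theorem Eqv.cons (x : ℤ) {a b : List ℤ} (h : Eqv a b) : Eqv (x :: a) (x :: b) := by
  simpa using h.left [x]
theorem Eqv.app {a b c d : List ℤ} (h : Eqv a b) (h' : Eqv c d) : Eqv (a ++ c) (b ++ d) :=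
  (h.right c).trans (h'.left b)

theorem Eqv.length {a b : List ℤ} (h : Eqv a b) : a.length = b.length := by
  refine Eqv.ind List.length ?_ h
  intro a b h
  cases h <;> simp

theorem Eqv.mem {a b : List ℤ} (h : Eqv a b) (c : ℤ) : c ∈ a ↔ c ∈ b := by
  have := Eqv.ind (fun w => c ∈ w) ?_ h
  · simpa using this
  intro a b h
  cases h <;> simp <;> tauto

def neg (w : List ℤ) : List ℤ := w.map (fun x => -x)

theorem neg_neg' (w : List ℤ) : neg (neg w) = w := by simp [neg]
theorem neg_app (a b : List ℤ) : neg (a ++ b) = neg a ++ neg b := by simp [neg]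
theorem neg_len (a : List ℤ) : (neg a).length = a.length := by simp [neg]
theorem mem_neg {a : List ℤ} {x : ℤ} : x ∈ neg a ↔ -x ∈ a := by
  simp only [neg, List.mem_map]
  constructor
  · rintro ⟨y, hy, rfl⟩; simpa using hy
  · intro h; exact ⟨-x, h, by simp⟩

theorem Eqv.neg {a b : List ℤ} (h : Eqv a b) : Eqv (neg a) (neg b) := by
  refine Eqv.lift YZ.neg ?_ h
  intro a b h
  cases h with
  | k1 p s x y z h1 h2 =>
    have := (Step.k1 (YZ.neg p) (YZ.neg s) (-z) (-y) (-x) (by omega) (by omega)).eqv.symm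
    simpa [YZ.neg] using this
  | k2 p s x y z h1 h2 =>
    have := (Step.k2 (YZ.neg p) (YZ.neg s) (-z) (-y) (-x) (by omega) (by omega)).eqv.symm
    simpa [YZ.neg] using this
  | br p s x =>
    have := (Step.br (YZ.neg p) (YZ.neg s) (-(x + 1))).eqv.symm
    have e : -(x + 1) + 1 = -x := by ring
    rw [e] at this
    simpa only [YZ.neg, List.map_append, List.map_cons] using this

theorem Eqv.rev {a b : List ℤ} (h : Eqv a b) : Eqv a.reverse b.reverse := by
  refine Eqv.lift List.reverse ?_ h
  intro a b h
  cases h with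
  | k1 p s x y z h1 h2 =>
    have := (Step.k2 s.reverse p.reverse x y z (by omega) (by omega)).eqv.symm
    simpa using this
  | k2 p s x y z h1 h2 =>
    have := (Step.k1 s.reverse p.reverse x y z (by omega) (by omega)).eqv.symm
    simpa using this
  | br p s x =>
    have := (Step.br s.reverse p.reverse x).eqv
    simpa using this

/-! Coxeter moves and reducedness -/

inductive CStep : List ℤ → List ℤ → Prop
  | cm (p s : List ℤ) (x y : ℤ) (h : x + 1 < y) : CStep (p ++ x :: y :: s) (p ++ y :: x :: s)
  | br (p s : List ℤ) (x : ℤ) :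
      CStep (p ++ x :: (x + 1) :: x :: s) (p ++ (x + 1) :: x :: (x + 1) :: s)

def CEqv : List ℤ → List ℤ → Prop := Relation.EqvGen CStep

theorem CEqv.lift (f : List ℤ → List ℤ) (hf : ∀ a b, CStep a b → CEqv (f a) (f b))
    {a b : List ℤ} (h : CEqv a b) : CEqv (f a) (f b) := by
  induction h with
  | rel a b h => exact hf a b h
  | refl a => exact Relation.EqvGen.refl _
  | symm a b _ ih => exact Relation.EqvGen.symm _ _ ih
  | trans a b c _ _ ih1 ih2 => exact Relation.EqvGen.trans _ _ _ ih1 ih2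

theorem CEqv.ctx (q t : List ℤ) {a b : List ℤ} (h : CEqv a b) :
    CEqv (q ++ a ++ t) (q ++ b ++ t) := by
  refine CEqv.lift (fun w => q ++ w ++ t) ?_ h
  intro a b h
  apply Relation.EqvGen.rel
  cases h with
  | cm p s x y h1 => simpa using CStep.cm (q ++ p) (s ++ t) x y h1
  | br p s x => simpa using CStep.br (q ++ p) (s ++ t) x

theorem CEqv.neg {a b : List ℤ} (h : CEqv a b) : CEqv (neg a) (neg b) := by
  refine CEqv.lift YZ.neg ?_ h
  intro a b h
  apply Relation.EqvGen.symm
  apply Relation.EqvGen.rel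
  cases h with
  | cm p s x y h1 =>
    have := (CStep.cm (YZ.neg p) (YZ.neg s) (-y) (-x) (by omega))
    simpa [YZ.neg] using this
  | br p s x =>
    have := (CStep.br (YZ.neg p) (YZ.neg s) (-(x + 1)))
    have e : -(x + 1) + 1 = -x := by ring
    rw [e] at this
    simpa only [YZ.neg, List.map_append, List.map_cons] using this

theorem CEqv.rev {a b : List ℤ} (h : CEqv a b) : CEqv a.reverse b.reverse := by
  refine CEqv.lift List.reverse ?_ h
  intro a b h
  cases h with
  | cm p s x y h1 =>
    apply Relation.EqvGen.symm
    apply Relation.EqvGen.rel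
    simpa using CStep.cm s.reverse p.reverse x y h1
  | br p s x =>
    apply Relation.EqvGen.rel
    simpa using CStep.br s.reverse p.reverse x

theorem Eqv.cox {a b : List ℤ} (h : Eqv a b) : CEqv a b := by
  induction h with
  | rel a b h =>
    cases h with
    | k1 p s x y z h1 h2 =>
      have := CStep.cm (p ++ [y]) s x z (by omega)
      exact Relation.EqvGen.rel _ _ (by simpa using this)
    | k2 p s x y z h1 h2 =>
      exact Relation.EqvGen.rel _ _ (CStep.cm p (y :: s) x z (by omega))
    | br p s x => exact Relation.EqvGen.rel _ _ (CStep.br p s x)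
  | refl a => exact Relation.EqvGen.refl _
  | symm a b _ ih => exact Relation.EqvGen.symm _ _ ih
  | trans a b c _ _ ih1 ih2 => exact Relation.EqvGen.trans _ _ _ ih1 ih2

def Red (w : List ℤ) : Prop := ∀ w', CEqv w w' → ∀ p a s, w' ≠ p ++ a :: a :: s

theorem Red.eqv {w w' : List ℤ} (h : Red w) (e : Eqv w w') : Red w' :=
  fun v hv => h v (Relation.EqvGen.trans _ _ _ e.cox hv)

theorem Red.factor {q w t : List ℤ} (h : Red (q ++ w ++ t)) : Red w := by
  intro w' e p a s he
  subst he
  exact h _ (e.ctx q t) (q ++ p) a (s ++ t) (by simp)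

theorem Red.pre {w t : List ℤ} (h : Red (w ++ t)) : Red w := by
  apply Red.factor (q := []) (t := t); simpa using h
theorem Red.suf {q w : List ℤ} (h : Red (q ++ w)) : Red w := by
  apply Red.factor (q := q) (t := []); simpa using h
theorem Red.tail {q : ℤ} {w : List ℤ} (h : Red (q :: w)) : Red w := Red.suf (q := [q]) h

theorem Red.neg {w : List ℤ} (h : Red w) : Red (neg w) := by
  intro w' e p a s he
  have := e.neg
  rw [neg_neg'] at this
  refine h _ this (YZ.neg p) (-a) (YZ.neg s) ?_
  subst he; simp [YZ.neg]

theorem Red.rev {w : List ℤ} (h : Red w) : Red w.reverse := by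
  intro w' e p a s he
  have := e.rev
  rw [List.reverse_reverse] at this
  refine h _ this s.reverse a p.reverse ?_
  subst he; simp

theorem not_red_sq (p s : List ℤ) (a : ℤ) : ¬ Red (p ++ a :: a :: s) :=
  fun h => h _ (Relation.EqvGen.refl _) p a s rfl

/-! Row insertion -/

abbrev Inc (r : List ℤ) : Prop := r.Pairwise (· < ·)

def ins (x : ℤ) : List ℤ → List ℤ × Option ℤ
  | [] => ([x], none)
  | a :: r => if x < a then (x :: r, some a)
      else if x = a then (a :: r, some (a + 1))
      else (a :: (ins x r).1, (ins x r).2)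

theorem ins_nil (x : ℤ) : ins x [] = ([x], none) := rfl
theorem ins_lt {x a : ℤ} (r : List ℤ) (h : x < a) : ins x (a :: r) = (x :: r, some a) := by
  simp [ins, h]
theorem ins_eq {x a : ℤ} (r : List ℤ) (h : x = a) : ins x (a :: r) = (a :: r, some (a + 1)) := by
  simp [ins, h]
theorem ins_gt {x a : ℤ} (r : List ℤ) (h : a < x) :
    ins x (a :: r) = (a :: (ins x r).1, (ins x r).2) := by
  have h1 : ¬ x < a := by omega
  have h2 : ¬ x = a := by omega
  simp [ins, h1, h2]

theorem mem_ins (x : ℤ) (r : List ℤ) : x ∈ (ins x r).1 := by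
  induction r with
  | nil => simp [ins]
  | cons a r ih =>
    rcases lt_trichotomy x a with h | h | h
    · simp [ins_lt r h]
    · rw [ins_eq r h]; simp [h]
    · simp [ins_gt r h, ih]

theorem ins_sub (x : ℤ) (r : List ℤ) : ∀ c ∈ (ins x r).1, c = x ∨ c ∈ r := by
  induction r with
  | nil => simp [ins]
  | cons a r ih =>
    rcases lt_trichotomy x a with h | h | h
    · simp [ins_lt r h]; tauto
    · simp [ins_eq r h]; tauto
    · simp only [ins_gt r h, List.mem_cons]
      rintro c (h | h)
      · tauto
      · rcases ih c h with h | h <;> tauto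

theorem ins_inc (x : ℤ) (r : List ℤ) (hr : Inc r) : Inc (ins x r).1 := by
  induction r with
  | nil => simp [ins]
  | cons a r ih =>
    rw [Inc, List.pairwise_cons] at hr
    rcases lt_trichotomy x a with h | h | h
    · simp only [ins_lt r h, Inc, List.pairwise_cons]
      exact ⟨fun b hb => h.trans (hr.1 b hb), hr.2⟩
    · simp only [ins_eq r h, Inc, List.pairwise_cons]
      exact hr
    · simp only [ins_gt r h, Inc, List.pairwise_cons]
      refine ⟨fun b hb => ?_, ih hr.2⟩
      rcases ins_sub x r b hb with h' | h'
      · omega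
      · exact hr.1 b h'

/-- bumped letter is larger than the inserted one -/
theorem ins_bump_gt (x : ℤ) (r : List ℤ) : ∀ z, (ins x r).2 = some z → x < z := by
  induction r with
  | nil => simp [ins]
  | cons a r ih =>
    intro z
    rcases lt_trichotomy x a with h | h | h
    · simp only [ins_lt r h, Option.some.injEq]; omega
    · simp only [ins_eq r h, Option.some.injEq]; omega
    · simp only [ins_gt r h]; exact ih z

/-- bumped letter is at most any larger letter of the row -/
theorem ins_bump_le (x : ℤ) (r : List ℤ) (hr : Inc r) (e : ℤ) (he : e ∈ r) (hx : x < e) :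
    ∃ z, (ins x r).2 = some z ∧ z ≤ e := by
  induction r with
  | nil => simp at he
  | cons a r ih =>
    rw [Inc, List.pairwise_cons] at hr
    rcases lt_trichotomy x a with h | h | h
    · refine ⟨a, by simp [ins_lt r h], ?_⟩
      rcases List.mem_cons.1 he with h' | h'
      · omega
      · exact (hr.1 e h').le
    · exact ⟨a + 1, by simp [ins_eq r h], by omega⟩
    · rw [ins_gt r h]
      rcases List.mem_cons.1 he with h' | h'
      · omega
      · exact ih hr.2 h'

theorem ins_none (x : ℤ) (r : List ℤ) (h : (ins x r).2 = none) : (ins x r).1 = r ++ [x] := by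
  induction r with
  | nil => simp [ins]
  | cons a r ih =>
    rcases lt_trichotomy x a with h' | h' | h'
    · simp [ins_lt r h'] at h
    · simp [ins_eq r h'] at h
    · rw [ins_gt r h'] at h ⊢
      simp [ih h]

theorem ins_none_of (x : ℤ) (r : List ℤ) (h : ∀ e ∈ r, e < x) : ins x r = (r ++ [x], none) := by
  induction r with
  | nil => simp [ins]
  | cons a r ih =>
    have h' := h a (by simp)
    rw [ins_gt r h', ih (fun e he => h e (by simp [he]))]
    simp

theorem ins_len (x : ℤ) (r : List ℤ) :
    (ins x r).1.length + (ins x r).2.toList.length = r.length + 1 := by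
  induction r with
  | nil => simp [ins]
  | cons a r ih =>
    rcases lt_trichotomy x a with h | h | h
    · simp [ins_lt r h]
    · simp [ins_eq r h]
    · simp only [ins_gt r h, List.length_cons]; omega

theorem ins_count (k x : ℤ) (hk : k < x) (r : List ℤ) :
    (ins x r).1.countP (fun a => decide (k < a)) + r.length
      = r.countP (fun a => decide (k < a)) + (ins x r).1.length := by
  induction r with
  | nil => simp [ins, hk]
  | cons a r ih =>
    rcases lt_trichotomy x a with h | h | h
    · have : k < a := by omega
      simp [ins_lt r h, hk, this]
    · simp [ins_eq r h]
    · simp only [ins_gt r h, List.length_cons, List.countP_cons]; omega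

theorem move_small (x a : ℤ) (r : List ℤ) (hr : Inc (a :: r)) (h : x < a) :
    Eqv (a :: r ++ [x]) (a :: x :: r) := by
  induction r generalizing a with
  | nil => exact Eqv.refl _
  | cons b r ih =>
    rw [Inc, List.pairwise_cons] at hr
    have hb : a < b := hr.1 b (by simp)
    have := (ih b hr.2 (by omega)).cons a
    refine Eqv.trans this ?_
    exact (Step.k1 [] r x a b h hb).eqv.symm

theorem valid_row (a : ℤ) (r : List ℤ) (hr : Inc (a :: r)) (h : Red (a :: r ++ [a])) :
    ∃ r', r = (a + 1) :: r' := by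
  cases r with
  | nil => exact absurd h (not_red_sq [] [] a)
  | cons b r =>
    rw [Inc, List.pairwise_cons] at hr
    have hb : a < b := hr.1 b (by simp)
    by_cases hb' : b = a + 1
    · exact ⟨r, by rw [hb']⟩
    · exfalso
      have h1 : Red (a :: b :: a :: r) := h.eqv ((move_small a b r hr.2 hb).cons a)
      have h2 : CEqv (a :: b :: a :: r) (a :: a :: b :: r) :=
        Relation.EqvGen.symm _ _ (Relation.EqvGen.rel _ _ (CStep.cm [a] r a b (by omega)))
      exact h1 _ h2 [] a (b :: r) rfl

theorem ins_eqv (x : ℤ) (r : List ℤ) (hr : Inc r) (h : Red (r ++ [x])) :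
    Eqv (r ++ [x]) ((ins x r).2.toList ++ (ins x r).1) := by
  induction r with
  | nil => exact Eqv.refl _
  | cons a r ih =>
    have hr' := hr
    rw [Inc, List.pairwise_cons] at hr
    rcases lt_trichotomy x a with h' | h' | h'
    · rw [ins_lt r h']
      exact move_small x a r hr' h'
    · subst h'
      rw [ins_eq r rfl]
      obtain ⟨r', rfl⟩ := valid_row x r hr' h
      have h1 := (move_small x (x + 1) r' hr.2 (by omega)).cons x
      refine Eqv.trans h1 ?_
      exact (Step.br [] r' x).eqv
    · rw [ins_gt r h']
      have h1 := (ih hr.2 h.tail).cons a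
      refine Eqv.trans h1 ?_
      have hm := mem_ins x r
      have hi := ins_inc x r hr.2
      have hs := ins_sub x r
      have hg := ins_bump_gt x r
      generalize (ins x r).1 = r1 at *
      generalize (ins x r).2 = o at *
      cases o with
      | none => exact Eqv.refl _
      | some y =>
        have hy := hg y rfl
        cases r1 with
        | nil => simp at hm
        | cons b t =>
          have hb : a < b := by
            rcases hs b (by simp) with h | h
            · omega
            · exact hr.1 b h
          have hbx : b ≤ x := by
            rw [Inc, List.pairwise_cons] at hi
            rcases List.mem_cons.1 hm with h | h
            · omega
            · exact (hi.1 x h).le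
          exact (Step.k2 [] t a b y hb (by omega)).eqv

theorem ins_inj (r1 r2 : List ℤ) (x1 x2 z : ℤ) (h1 : Inc r1) (h2 : Inc r2)
    (g1 : Red (r1 ++ [x1])) (g2 : Red (r2 ++ [x2]))
    (e : (ins x1 r1).1 = (ins x2 r2).1) (b1 : (ins x1 r1).2 = some z)
    (b2 : (ins x2 r2).2 = some z) : r1 = r2 ∧ x1 = x2 := by
  induction r1 generalizing r2 with
  | nil => simp [ins] at b1
  | cons a r ih =>
    cases r2 with
    | nil => simp [ins] at b2
    | cons b t =>
      have p1 := List.pairwise_cons.1 h1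
      have p2 := List.pairwise_cons.1 h2
      have key : ∀ (a b x1 x2 z : ℤ) (r t : List ℤ), Inc (a :: r) → Inc (b :: t) →
          Red (b :: t ++ [x2]) → x1 < a →
          (ins x1 (a :: r)).1 = (ins x2 (b :: t)).1 → (ins x1 (a :: r)).2 = some z →
          (ins x2 (b :: t)).2 = some z → a :: r = b :: t ∧ x1 = x2 := by
        intro a b x1 x2 z r t h1 h2 g2 hx e b1 b2
        have p1 := List.pairwise_cons.1 h1
        rw [ins_lt r hx] at e b1
        simp only [Option.some.injEq] at b1
        subst b1
        rcases lt_trichotomy x2 b with h | h | h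
        · rw [ins_lt t h] at e b2
          simp only [List.cons.injEq, Option.some.injEq] at e b2
          exact ⟨by rw [b2, e.2], e.1⟩
        · subst h
          rw [ins_eq t rfl] at e b2
          obtain ⟨t', rfl⟩ := valid_row x2 t h2 g2
          simp only [List.cons.injEq, Option.some.injEq] at e b2
          have := p1.1 (x2 + 1) (by rw [e.2]; simp)
          omega
        · rw [ins_gt t h] at e b2
          simp only [List.cons.injEq] at e
          have q1 := ins_bump_gt x2 t _ b2
          have := p1.1 x2 (by rw [e.2]; exact mem_ins x2 t)
          omega
      rcases lt_trichotomy x1 a with h | h | h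
      · exact key a b x1 x2 z r t h1 h2 g2 h e b1 b2
      · rcases lt_trichotomy x2 b with h' | h' | h'
        · have := key b a x2 x1 z t r h2 h1 g1 h' e.symm b2 b1
          exact ⟨this.1.symm, this.2.symm⟩
        · rw [ins_eq r h, ins_eq t h'] at e
          simp only at e
          refine ⟨e, ?_⟩
          simp only [List.cons.injEq] at e
          omega
        · rw [ins_eq r h] at e b1
          rw [ins_gt t h'] at e b2
          simp only [List.cons.injEq, Option.some.injEq] at e b1
          have q1 := ins_bump_gt x2 t _ b2
          omega
      · rcases lt_trichotomy x2 b with h' | h' | h'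
        · have := key b a x2 x1 z t r h2 h1 g1 h' e.symm b2 b1
          exact ⟨this.1.symm, this.2.symm⟩
        · rw [ins_gt r h] at e b1
          rw [ins_eq t h'] at e b2
          simp only [List.cons.injEq, Option.some.injEq] at e b2
          have q1 := ins_bump_gt x1 r _ b1
          omega
        · rw [ins_gt r h] at e b1
          rw [ins_gt t h'] at e b2
          simp only [List.cons.injEq] at e
          have := ih t p1.2 p2.2 g1.tail g2.tail e.2 b1 b2
          exact ⟨by rw [this.1, e.1], this.2⟩

/-- insert a list of letters into a row, recording the bumped letters -/
def insL : List ℤ → List ℤ → List ℤ × List ℤ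
  | [], r => ([], r)
  | x :: s, r => ((ins x r).2.toList ++ (insL s (ins x r).1).1, (insL s (ins x r).1).2)

theorem insL_app (s t r : List ℤ) : insL (s ++ t) r =
    ((insL s r).1 ++ (insL t (insL s r).2).1, (insL t (insL s r).2).2) := by
  induction s generalizing r with
  | nil => simp [insL]
  | cons x s ih => simp [insL, ih]

end YZ

namespace YZ

set_option linter.unusedSimpArgs false

theorem ins_bump_from (x : ℤ) (r : List ℤ) (z : ℤ) (h : (ins x r).2 = some z) :
    z ∈ r ∨ z - 1 ∈ r := by
  induction r with
  | nil => simp [ins] at h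
  | cons a r ih =>
    rcases lt_trichotomy x a with h' | h' | h'
    · simp [ins_lt r h'] at h; simp [h]
    · simp [ins_eq r h'] at h; right; simp [← h]
    · rw [ins_gt r h'] at h
      rcases ih h with h | h <;> simp [h]

theorem ins_bump_lb (x : ℤ) (r : List ℤ) (z a : ℤ) (h : (ins x r).2 = some z)
    (ha : ∀ e ∈ r, a < e) : a < z := by
  rcases ins_bump_from x r z h with h | h
  · exact ha _ h
  · have := ha _ h; omega

theorem two_inc (y z : ℤ) (hyz : y < z) (r : List ℤ) (hr : Inc r) (z' : ℤ)
    (h : (ins z (ins y r).1).2 = some z') : ∃ y', (ins y r).2 = some y' ∧ y' < z' := by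
  induction r with
  | nil => simp [ins, hyz.le.not_gt, hyz.ne'] at h
  | cons a r ih =>
    have hr' := List.pairwise_cons.1 hr
    rcases lt_trichotomy y a with h' | h' | h'
    · simp (disch := omega) only [ins_lt, ins_gt] at h ⊢
      exact ⟨a, rfl, ins_bump_lb z r z' a h hr'.1⟩
    · simp (disch := omega) only [ins_eq, ins_gt] at h ⊢
      have := ins_bump_gt _ _ _ h
      exact ⟨a + 1, rfl, by omega⟩
    · simp (disch := omega) only [ins_gt] at h ⊢
      exact ih hr'.2 h

theorem insL_gt (s : List ℤ) (a : ℤ) (r : List ℤ) (h : ∀ c ∈ s, a < c) :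
    insL s (a :: r) = ((insL s r).1, a :: (insL s r).2) := by
  induction s generalizing r with
  | nil => simp [insL]
  | cons x s ih =>
    have hx := h x (by simp)
    simp only [insL, ins_gt r hx]
    rw [ih _ (fun c hc => h c (by simp [hc]))]

def Same (r l l' : List ℤ) : Prop :=
  (insL l r).2 = (insL l' r).2 ∧ Eqv (insL l r).1 (insL l' r).1

theorem Same.cons {r l l' : List ℤ} (h : Same r l l') (a : ℤ) (h1 : ∀ c ∈ l, a < c)
    (h2 : ∀ c ∈ l', a < c) : Same (a :: r) l l' := by
  unfold Same at *
  rw [insL_gt l a r h1, insL_gt l' a r h2]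
  exact ⟨by simp [h.1], h.2⟩

theorem k1o (x y : ℤ) (z : Option ℤ) (h1 : x < y) (h2 : ∀ z', z = some z' → y < z') :
    Eqv (y :: x :: z.toList) (y :: (z.toList ++ [x])) := by
  cases z with
  | none => exact Eqv.refl _
  | some z => exact (Step.k1 [] [] x y z h1 (h2 z rfl)).eqv

theorem tri_k1 (x y z : ℤ) (h1 : x < y) (h2 : y < z) (r : List ℤ) (hr : Inc r) :
    Same r [y, x, z] [y, z, x] := by
  induction r with
  | nil =>
    unfold Same
    simp (disch := omega) only [insL, ins_nil, ins_lt, ins_gt]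
    exact ⟨trivial, Eqv.refl _⟩
  | cons a r ih =>
    have hr' := List.pairwise_cons.1 hr
    have T := two_inc y z h2 r hr'.2
    rcases lt_trichotomy x a with h | h | h
    · rcases lt_trichotomy y a with h' | h' | h'
      · unfold Same
        simp (disch := omega) only [insL, ins_lt, ins_gt]
        refine ⟨trivial, ?_⟩
        simpa using k1o y a (ins z r).2 h' (fun z' hz => ins_bump_lb z r z' a hz hr'.1)
      · unfold Same
        simp (disch := omega) only [insL, ins_lt, ins_gt, ins_eq]
        refine ⟨trivial, ?_⟩
        simpa using k1o a (a + 1) (ins z r).2 (by omega)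
          (fun z' hz => by have := ins_bump_gt _ _ _ hz; omega)
      · unfold Same
        simp (disch := omega) only [insL, ins_lt, ins_gt]
        refine ⟨trivial, ?_⟩
        have G := ins_bump_gt y r
        generalize (ins y r).2 = o at *
        generalize (ins z (ins y r).1).2 = o' at *
        cases o' with
        | none => simpa using Eqv.refl _
        | some z' =>
          obtain ⟨y', rfl, hy⟩ := T z' rfl
          have := G y' rfl
          simpa using k1o a y' (some z') (by omega) (by simpa using hy)
    · unfold Same
      simp (disch := omega) only [insL, ins_lt, ins_gt, ins_eq]
      refine ⟨trivial, ?_⟩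
      have G := ins_bump_gt y r
      generalize (ins y r).2 = o at *
      generalize (ins z (ins y r).1).2 = o' at *
      cases o' with
      | none => simpa using Eqv.refl _
      | some z' =>
        obtain ⟨y', rfl, hy⟩ := T z' rfl
        have := G y' rfl
        simpa using k1o (a + 1) y' (some z') (by omega) (by simpa using hy)
    · exact (ih hr'.2).cons a (by simp; omega) (by simp; omega)

theorem k2o (x y : ℤ) (z : Option ℤ) (h1 : x < y) (h2 : ∀ z', z = some z' → y < z') :
    Eqv (x :: (z.toList ++ [y])) (z.toList ++ [x, y]) := by
  cases z with
  | none => exact Eqv.refl _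
  | some z => exact (Step.k2 [] [] x y z h1 (h2 z rfl)).eqv

theorem tri_k2 (x y z : ℤ) (h1 : x < y) (h2 : y < z) (r : List ℤ) (hr : Inc r)
    (hd : Red (r ++ [z, x, y])) :
    Same r [x, z, y] [z, x, y] := by
  induction r with
  | nil =>
    unfold Same
    simp (disch := omega) only [insL, ins_nil, ins_lt, ins_gt]
    exact ⟨trivial, Eqv.refl _⟩
  | cons a r ih =>
    have hr' := List.pairwise_cons.1 hr
    rcases lt_trichotomy x a with h | h | h
    · rcases lt_trichotomy z a with h' | h' | h'
      · cases r with
        | nil =>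
          unfold Same
          simp (disch := omega) only [insL, ins_nil, ins_lt, ins_gt]
          exact ⟨trivial, Eqv.refl _⟩
        | cons b t =>
          have := hr'.1 b (by simp)
          unfold Same
          simp (disch := omega) only [insL, ins_lt, ins_gt]
          refine ⟨trivial, ?_⟩
          simpa using (k1o z a (some b) h' (by simpa using this)).symm
      · obtain ⟨t, rfl⟩ := valid_row a r hr (by
          subst h'
          apply Red.pre (t := [x, y]); simpa using hd)
        unfold Same
        simp (disch := omega) only [insL, ins_lt, ins_gt, ins_eq]
        subst h'
        refine ⟨trivial, ?_⟩
        simpa using (Step.br [] [] z).eqv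
      · unfold Same
        simp (disch := omega) only [insL, ins_lt, ins_gt]
        refine ⟨trivial, ?_⟩
        obtain ⟨y', e, hy⟩ := ins_bump_le y (ins z r).1 (ins_inc z r hr'.2) z (mem_ins z r) h2
        have G := ins_bump_gt z r
        have L := ins_bump_lb y _ y' a e (fun c hc => by
          rcases ins_sub z r c hc with h | h
          · omega
          · exact hr'.1 c h)
        rw [e]
        simpa using k2o a y' (ins z r).2 L (fun z' hz => by have := G z' hz; omega)
    · unfold Same
      simp (disch := omega) only [insL, ins_lt, ins_gt, ins_eq]
      refine ⟨trivial, ?_⟩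
      obtain ⟨y', e, hy⟩ := ins_bump_le y (ins z r).1 (ins_inc z r hr'.2) z (mem_ins z r) h2
      have G := ins_bump_gt z r
      have L := ins_bump_gt y _ y' e
      rw [e]
      simpa using k2o (a + 1) y' (ins z r).2 (by omega)
        (fun z' hz => by have := G z' hz; omega)
    · exact (ih hr'.2 hd.tail).cons a (by simp; omega) (by simp; omega)

theorem tri_br (x : ℤ) (r : List ℤ) (hr : Inc r)
    (hd : Red (r ++ [x, x + 1, x])) (hd' : Red (r ++ [x + 1, x, x + 1])) :
    Same r [x, x + 1, x] [x + 1, x, x + 1] := by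
  induction r with
  | nil =>
    unfold Same
    simp (disch := omega) only [insL, ins_nil, ins_lt, ins_gt, ins_eq]
    exact ⟨trivial, Eqv.refl _⟩
  | cons a r ih =>
    have hr' := List.pairwise_cons.1 hr
    rcases lt_trichotomy x a with h | h | h
    · by_cases h' : a = x + 1
      · subst h'
        obtain ⟨t, rfl⟩ := valid_row (x + 1) r hr (by
          apply Red.pre (t := [x, x + 1]); simpa using hd')
        unfold Same
        simp (disch := omega) only [insL, ins_lt, ins_gt, ins_eq]
        refine ⟨trivial, ?_⟩
        simpa using (Step.br [] [] (x + 1)).eqv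
      · unfold Same
        cases r with
        | nil =>
          simp (disch := omega) only [insL, ins_nil, ins_lt, ins_gt, ins_eq]
          exact ⟨trivial, Eqv.refl _⟩
        | cons b t =>
          have := hr'.1 b (by simp)
          simp (disch := omega) only [insL, ins_nil, ins_lt, ins_gt, ins_eq]
          refine ⟨trivial, ?_⟩
          simpa using (k1o (x + 1) a (some b) (by omega) (by simpa using this)).symm
    · subst h
      obtain ⟨t, rfl⟩ := valid_row x r hr (by
          apply Red.pre (t := [x + 1, x]); simpa using hd)
      unfold Same
      simp (disch := omega) only [insL, ins_nil, ins_lt, ins_gt, ins_eq]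
      refine ⟨trivial, ?_⟩
      simpa using (Step.br [] [] (x + 1)).eqv
    · exact (ih hr'.2 hd.tail hd'.tail).cons a (by simp; omega) (by simp; omega)

/-! the bumped word and the first row -/

def bt (w : List ℤ) : List ℤ := (insL w []).1
def rw' (w : List ℤ) : List ℤ := (insL w []).2

theorem insL_inc (s r : List ℤ) (hr : Inc r) : Inc (insL s r).2 := by
  induction s generalizing r with
  | nil => exact hr
  | cons x s ih => exact ih _ (ins_inc x r hr)

theorem rw_inc (w : List ℤ) : Inc (rw' w) := insL_inc w [] (by simp)

theorem bt_snoc (w : List ℤ) (x : ℤ) : bt (w ++ [x]) = bt w ++ (ins x (rw' w)).2.toList := by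
  simp [bt, rw', insL_app, insL]
theorem rw_snoc (w : List ℤ) (x : ℤ) : rw' (w ++ [x]) = (ins x (rw' w)).1 := by
  simp [rw', insL_app, insL]
theorem bt_app (u v : List ℤ) : bt (u ++ v) = bt u ++ (insL v (rw' u)).1 := by
  simp [bt, rw', insL_app]
theorem rw_app (u v : List ℤ) : rw' (u ++ v) = (insL v (rw' u)).2 := by
  simp [rw', insL_app]

theorem bt_len (w : List ℤ) : (bt w).length + (rw' w).length = w.length := by
  induction w using List.reverseRecOn with
  | nil => simp [bt, rw', insL]
  | append_singleton w x ih =>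
    have := ins_len x (rw' w)
    rw [bt_snoc, rw_snoc]
    simp only [List.length_append, List.length_singleton]
    omega

theorem bt_eqv (w : List ℤ) (h : Red w) : Eqv w (bt w ++ rw' w) := by
  induction w using List.reverseRecOn with
  | nil => exact Eqv.refl _
  | append_singleton w x ih =>
    have e := (ih h.pre).right [x]
    refine e.trans ?_
    have h2 := h.eqv e
    rw [bt_snoc, rw_snoc]
    rw [List.append_assoc] at h2 ⊢
    rw [List.append_assoc]
    exact (ins_eqv x (rw' w) (rw_inc w) h2.suf).left _

theorem same_ctx (p s l l' : List ℤ) (h : Same (rw' p) l l') :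
    rw' (p ++ l ++ s) = rw' (p ++ l' ++ s) ∧ Eqv (bt (p ++ l ++ s)) (bt (p ++ l' ++ s)) := by
  have e : rw' (p ++ l) = rw' (p ++ l') := by rw [rw_app, rw_app]; exact h.1
  refine ⟨by rw [rw_app, e, ← rw_app], ?_⟩
  rw [bt_app (p ++ l) s, bt_app (p ++ l') s, ← e]
  apply Eqv.right
  rw [bt_app, bt_app]
  exact h.2.left _

theorem inv_step {w w' : List ℤ} (h : Step w w') (hd : Red w) :
    rw' w = rw' w' ∧ Eqv (bt w) (bt w') := by
  have hd' := hd.eqv h.eqv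
  have key : ∀ p l s : List ℤ, Red (p ++ l ++ s) → Red (rw' p ++ l) := by
    intro p l s h
    have := h.pre.eqv ((bt_eqv p h.pre.pre).right l)
    rw [List.append_assoc] at this
    exact this.suf
  cases h with
  | k1 p s x y z h1 h2 =>
    simpa using same_ctx p s _ _ (tri_k1 x y z h1 h2 (rw' p) (rw_inc p))
  | k2 p s x y z h1 h2 =>
    simpa using same_ctx p s _ _ (tri_k2 x y z h1 h2 (rw' p) (rw_inc p)
      (key p _ s (by simpa using hd')))
  | br p s x =>
    simpa using same_ctx p s _ _ (tri_br x (rw' p) (rw_inc p)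
      (key p _ s (by simpa using hd)) (key p _ s (by simpa using hd')))

theorem inv {w w' : List ℤ} (h : Eqv w w') (hd : Red w) :
    rw' w = rw' w' ∧ Eqv (bt w) (bt w') := by
  induction h with
  | rel a b h => exact inv_step h hd
  | refl a => exact ⟨rfl, Eqv.refl _⟩
  | symm a b h ih =>
    have := ih (hd.eqv (Eqv.symm h))
    exact ⟨this.1.symm, this.2.symm⟩
  | trans a b c h h' ih1 ih2 =>
    have q1 := ih1 hd
    have q2 := ih2 (hd.eqv h)
    exact ⟨q1.1.trans q2.1, q1.2.trans q2.2⟩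

theorem bt_red {w : List ℤ} (h : Red w) : Red (bt w) := (h.eqv (bt_eqv w h)).pre

end YZ

namespace YZ

theorem insL_len_mono (s r : List ℤ) : r.length ≤ (insL s r).2.length := by
  induction s generalizing r with
  | nil => exact le_refl _
  | cons x s ih =>
    have h1 := ins_len x r
    have h2 : (ins x r).2.toList.length ≤ 1 := by cases (ins x r).2 <;> simp
    exact le_trans (by omega) (ih _)

theorem insL_row (s r : List ℤ) (h : Inc (r ++ s)) : insL s r = ([], r ++ s) := by
  induction s generalizing r with
  | nil => simp [insL]
  | cons x s ih =>
    have hx : ∀ e ∈ r, e < x := by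
      intro e he
      exact (List.pairwise_append.1 h).2.2 e he x (by simp)
    simp only [insL, ins_none_of x r hx]
    rw [ih (r ++ [x]) (by simpa using h)]
    simp

theorem rw_row (s : List ℤ) (h : Inc s) : rw' s = s := by
  simp [rw', insL_row s [] (by simpa using h)]

theorem inc_prefix {w r s : List ℤ} (hd : Red w) (e : Eqv w (r ++ s)) (hr : Inc r) :
    r.length ≤ (rw' w).length := by
  rw [(inv e hd).1, rw_app, rw_row r hr]
  exact insL_len_mono s r

theorem ins_keep (x y : ℤ) (r : List ℤ) (hx : x ∈ r) (h : x < y) : x ∈ (ins y r).1 := by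
  induction r with
  | nil => simp at hx
  | cons a r ih =>
    rcases lt_trichotomy y a with h' | h' | h'
    · rw [ins_lt r h']
      rcases List.mem_cons.1 hx with h1 | h1
      · omega
      · simp [h1]
    · rw [ins_eq r h']; exact hx
    · rw [ins_gt r h']
      rcases List.mem_cons.1 hx with h1 | h1
      · simp [h1]
      · simp [ih h1]

theorem insL_keep1 (s r : List ℤ) (x : ℤ) (hx : x ∈ r) (h : ∀ y ∈ s, x < y) :
    x ∈ (insL s r).2 := by
  induction s generalizing r with
  | nil => exact hx
  | cons y s ih =>
    exact ih _ (ins_keep x y r hx (h y (by simp))) (fun z hz => h z (by simp [hz]))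

theorem insL_keep (s r : List ℤ) (h : Inc s) : ∀ x ∈ s, x ∈ (insL s r).2 := by
  induction s generalizing r with
  | nil => simp
  | cons y s ih =>
    have h' := List.pairwise_cons.1 h
    intro x hx
    rcases List.mem_cons.1 hx with h1 | h1
    · subst h1
      exact insL_keep1 s _ x (mem_ins x r) h'.1
    · exact ih _ h'.2 x h1

theorem insL_count (k : ℤ) (s r : List ℤ) (h : ∀ x ∈ s, k < x) :
    (insL s r).2.countP (fun a => decide (k < a)) + r.length
      = r.countP (fun a => decide (k < a)) + (insL s r).2.length := by
  induction s generalizing r with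
  | nil => simp [insL]
  | cons y s ih =>
    have h1 := ih (ins y r).1 (fun x hx => h x (by simp [hx]))
    have h2 := ins_count k y (h y (by simp)) r
    simp only [insL]
    omega

/-! left-oriented versions -/

def X (w : List ℤ) : List ℤ := neg (bt (neg w))
def dd (w : List ℤ) : List ℤ := neg (rw' (neg w))
def cc (w : List ℤ) : List ℤ := rw' w.reverse
def ll (w : List ℤ) : ℕ := (rw' (neg w)).length
def rk (k : ℤ) (w : List ℤ) : ℕ := (cc w).countP (fun a => decide (k < a))

theorem X_eqv {w w' : List ℤ} (hd : Red w) (e : Eqv w w') : Eqv (X w) (X w') :=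
  (inv e.neg hd.neg).2.neg
theorem ll_eqv {w w' : List ℤ} (hd : Red w) (e : Eqv w w') : ll w = ll w' := by
  unfold ll; rw [(inv e.neg hd.neg).1]
theorem cc_eqv {w w' : List ℤ} (hd : Red w) (e : Eqv w w') : cc w = cc w' :=
  (inv e.rev hd.rev).1
theorem X_dec {w : List ℤ} (hd : Red w) : Eqv w (X w ++ dd w) := by
  have := (bt_eqv (neg w) hd.neg).neg
  rwa [neg_neg', neg_app] at this
theorem X_app (u v : List ℤ) : ∃ t, X (u ++ v) = X u ++ t := by
  unfold X
  rw [neg_app, bt_app, neg_app]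
  exact ⟨_, rfl⟩
theorem X_red {w : List ℤ} (hd : Red w) : Red (X w) := (hd.eqv (X_dec hd)).pre
theorem X_len (w : List ℤ) : (X w).length + ll w = w.length := by
  have := bt_len (neg w)
  rw [neg_len] at this
  rw [X, ll, neg_len]; exact this
theorem dd_len (w : List ℤ) : (dd w).length = ll w := neg_len _
theorem neg_inc {r : List ℤ} (h : Inc r) : Inc (neg r).reverse := by
  unfold Inc neg
  rw [List.pairwise_reverse, List.pairwise_map]
  exact h.imp (by intro a b h; omega)
theorem dd_inc (w : List ℤ) : Inc (dd w).reverse := neg_inc (rw_inc _)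
theorem cc_inc (w : List ℤ) : Inc (cc w) := rw_inc _
theorem X_mem {w : List ℤ} (hd : Red w) {c : ℤ} (h : c ∈ X w) : c ∈ w := by
  rw [(X_dec hd).mem c]; simp [h]

theorem cc_dec {w : List ℤ} (hd : Red w) : ∃ s, Eqv w ((cc w).reverse ++ s) := by
  have := (bt_eqv _ hd.rev).rev
  rw [List.reverse_reverse, List.reverse_append] at this
  exact ⟨_, this⟩

theorem ll_cc {w : List ℤ} (hd : Red w) : ll w = (cc w).length := by
  apply le_antisymm
  · have e := (X_dec hd).rev
    rw [List.reverse_append] at e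
    have := inc_prefix hd.rev e (dd_inc w)
    rw [List.length_reverse, dd_len] at this
    exact this
  · obtain ⟨s, e⟩ := cc_dec hd
    have e := e.neg
    rw [neg_app] at e
    have := inc_prefix hd.neg e (by
      have := neg_inc (cc_inc w)
      simpa [neg] using this)
    rw [neg_len, List.length_reverse] at this
    exact this

theorem cc_mono {w u v : List ℤ} (hd : Red w) (e : Eqv w (u ++ v)) :
    (cc v).length ≤ (cc w).length := by
  rw [cc_eqv hd e, cc, cc, List.reverse_append, rw_app]
  exact insL_len_mono _ _

theorem rk_part {k : ℤ} {w u v : List ℤ} (hd : Red w) (e : Eqv w (u ++ v))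
    (hu : ∀ c ∈ u, k < c) :
    (cc u).Sublist ((cc w).filter (fun a => decide (k < a))) := by
  have hr : Red u := (hd.eqv e).pre
  have e1 := (bt_eqv _ hr.rev)
  have e2 : Eqv w.reverse ((v.reverse ++ bt u.reverse) ++ rw' u.reverse) := by
    refine e.rev.trans ?_
    rw [List.reverse_append, List.append_assoc]
    exact e1.left _
  have e3 : cc w = (insL (cc u) (rw' (v.reverse ++ bt u.reverse))).2 := by
    rw [cc, (inv e2 hd.rev).1, rw_app]; rfl
  have hk := insL_keep (cc u) (rw' (v.reverse ++ bt u.reverse)) (cc_inc u)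
  rw [← e3] at hk
  have hc : ∀ c ∈ cc u, k < c := by
    intro c hc
    apply hu
    have := e1.mem c
    rw [List.mem_reverse] at this
    rw [this]
    exact List.mem_append_right _ hc
  have i1 := cc_inc u
  have i2 : Inc ((cc w).filter (fun a => decide (k < a))) := (cc_inc w).filter _
  apply List.sublist_of_subperm_of_pairwise (r := (· < ·)) _ i1 i2
  apply List.Nodup.subperm
  · exact i1.imp (by intro a b h; omega)
  · intro c h
    simp [hk c h, hc c h]

theorem rk_le {k : ℤ} {w u v : List ℤ} (hd : Red w) (e : Eqv w (u ++ v))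
    (hu : ∀ c ∈ u, k < c) : (cc u).length ≤ rk k w := by
  have := (rk_part hd e hu).length_le
  rwa [← List.countP_eq_length_filter] at this

theorem rk_eq {k : ℤ} {w u v : List ℤ} (hd : Red w) (e : Eqv w (u ++ v))
    (hu : ∀ c ∈ u, k < c) (h : (cc u).length = rk k w) :
    cc u = (cc w).filter (fun a => decide (k < a)) := by
  apply (rk_part hd e hu).eq_of_length
  rw [← List.countP_eq_length_filter]; exact h

/-! maximal prefixes -/

open Classical in
noncomputable def M (w : List ℤ) (k : ℤ) : ℕ :=
  Nat.findGreatest (fun m => ∃ u v, Eqv w (u ++ v) ∧ u.length = m ∧ ∀ c ∈ u, k < c) w.length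

theorem M_spec (w : List ℤ) (k : ℤ) :
    ∃ u v, Eqv w (u ++ v) ∧ u.length = M w k ∧ ∀ c ∈ u, k < c := by
  classical
  have := Nat.findGreatest_spec (P := fun m => ∃ u v, Eqv w (u ++ v) ∧ u.length = m ∧
    ∀ c ∈ u, k < c) (m := 0) (n := w.length) (Nat.zero_le _)
    ⟨[], w, Eqv.refl _, rfl, by simp⟩
  unfold M
  convert this

theorem M_ge {w u v : List ℤ} {k : ℤ} (e : Eqv w (u ++ v)) (h : ∀ c ∈ u, k < c) :
    u.length ≤ M w k := by
  classical
  unfold M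
  apply Nat.le_findGreatest
  · rw [e.length, List.length_append]; omega
  · exact ⟨u, v, e, rfl, h⟩

theorem M_le_len (w : List ℤ) (k : ℤ) : M w k ≤ w.length := by
  classical
  unfold M; exact Nat.findGreatest_le _

theorem M_eqv {w w' : List ℤ} (e : Eqv w w') (k : ℤ) : M w k = M w' k := by
  apply le_antisymm
  · obtain ⟨u, v, e', h, hu⟩ := M_spec w k
    rw [← h]; exact M_ge (e.symm.trans e') hu
  · obtain ⟨u, v, e', h, hu⟩ := M_spec w' k
    rw [← h]; exact M_ge (e.trans e') hu

theorem M_anti (w : List ℤ) {k k' : ℤ} (h : k ≤ k') : M w k' ≤ M w k := by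
  obtain ⟨u, v, e', h', hu⟩ := M_spec w k'
  rw [← h']; exact M_ge e' (fun c hc => by have := hu c hc; omega)

theorem filter_split (k : ℤ) (r : List ℤ) (h : Inc r) :
    r = r.filter (fun a => decide (¬ k < a)) ++ r.filter (fun a => decide (k < a)) := by
  induction r with
  | nil => rfl
  | cons a r ih =>
    have h' := List.pairwise_cons.1 h
    by_cases hk : k < a
    · have e1 : (a :: r).filter (fun a => decide (k < a)) = a :: r := by
        rw [List.filter_eq_self]
        intro b hb
        rcases List.mem_cons.1 hb with h1 | h1
        · simp [h1, hk]
        · have := h'.1 b h1; simp; omega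
      have e2 : (a :: r).filter (fun a => decide (¬ k < a)) = [] := by
        rw [List.filter_eq_nil_iff]
        intro b hb
        rcases List.mem_cons.1 hb with h1 | h1
        · simp [h1, hk]
        · have := h'.1 b h1; simp; omega
      rw [e1, e2]; rfl
    · simp only [List.filter_cons, hk, not_false_eq_true, decide_true, if_true, decide_false]
      simp only [List.cons_append]
      exact congrArg _ (ih h'.2)

theorem Th1_le {w u v : List ℤ} {k : ℤ} (hd : Red w) (e : Eqv w (u ++ v))
    (hu : ∀ c ∈ u, k < c) :
    (∃ t, Eqv (X w) (X u ++ t)) ∧ (∀ c ∈ X u, k < c) ∧ u.length = (X u).length + (cc u).length := by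
  have hr : Red u := (hd.eqv e).pre
  refine ⟨?_, fun c hc => hu c (X_mem hr hc), ?_⟩
  · obtain ⟨t, ht⟩ := X_app u v
    exact ⟨t, ht ▸ X_eqv hd e⟩
  · rw [← ll_cc hr, X_len]

theorem Th1 {w : List ℤ} (k : ℤ) (hd : Red w) : M w k = M (X w) k + rk k w := by
  apply le_antisymm
  · obtain ⟨u, v, e, h, hu⟩ := M_spec w k
    obtain ⟨⟨t, ht⟩, hx, hl⟩ := Th1_le hd e hu
    have := M_ge ht hx
    have := rk_le hd e hu
    omega
  · obtain ⟨U, t, e, h, hU⟩ := M_spec (X w) k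
    have e1 : Eqv w (U ++ (t ++ dd w)) := by
      refine (X_dec hd).trans ?_
      rw [← List.append_assoc]
      exact e.right _
    set D := t ++ dd w with hD
    have rD : Red D := (hd.eqv e1).suf
    have l1 := cc_mono hd e1
    have l2 : (cc w).length ≤ (cc D).length := by
      have := inc_prefix rD.rev (r := (dd w).reverse) (s := t.reverse)
        (by rw [hD, List.reverse_append]; exact Eqv.refl _) (dd_inc w)
      rw [List.length_reverse, dd_len, ll_cc hd] at this
      exact this
    have l3 : rk k w = rk k D := by
      have := insL_count k U.reverse (cc D) (by simpa using hU)
      have e2 : (insL U.reverse (cc D)).2 = cc w := by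
        rw [cc_eqv hd e1, cc, cc, List.reverse_append (as := U) (bs := D), rw_app D.reverse]
      rw [e2] at this
      unfold rk
      omega
    obtain ⟨s, hs⟩ := cc_dec rD
    rw [filter_split k (cc D) (cc_inc D), List.reverse_append] at hs
    have e3 := e1.trans (hs.left U)
    rw [List.append_assoc, ← List.append_assoc U] at e3
    have := M_ge (k := k) e3 (by
      intro c hc
      rcases List.mem_append.1 hc with h | h
      · exact hU c h
      · simp at h; exact h.2)
    rw [List.length_append, List.length_reverse, ← List.countP_eq_length_filter, h] at this
    rw [l3]
    exact this

theorem Th1_max {w u v : List ℤ} {k : ℤ} (hd : Red w) (e : Eqv w (u ++ v))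
    (hu : ∀ c ∈ u, k < c) (hm : u.length = M w k) :
    (∃ t, Eqv (X w) (X u ++ t)) ∧ (∀ c ∈ X u, k < c) ∧ (X u).length = M (X w) k ∧
      (cc u).length = rk k w := by
  obtain ⟨⟨t, ht⟩, hx, hl⟩ := Th1_le hd e hu
  have h1 := M_ge ht hx
  have h2 := rk_le hd e hu
  have h3 := Th1 k hd
  exact ⟨⟨t, ht⟩, hx, by omega, by omega⟩

theorem ll_pos (w : List ℤ) (h : w ≠ []) : 0 < ll w := by
  unfold ll
  rcases List.eq_nil_or_concat (neg w) with h' | ⟨l, x, h'⟩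
  · simp [neg] at h'; exact absurd h' h
  · rw [h', List.concat_eq_append, rw_snoc]
    have := mem_ins x (rw' l)
    exact List.length_pos_of_mem this

theorem Th2 (n : ℕ) : ∀ {w u v : List ℤ} {k : ℤ} (_ : w.length ≤ n) (_ : Red w)
    (_ : Eqv w (u ++ v)) (_ : ∀ c ∈ u, k < c) (_ : u.length = M w k) (k' : ℤ) (_ : k ≤ k'),
    M u k' = M w k' := by
  induction n with
  | zero =>
    intro w u v k hn hd e hu hm k' hk
    have hw : w = [] := List.length_eq_zero_iff.1 (by omega)
    have : u.length = 0 := by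
      have := e.length; rw [hw, List.length_append, List.length_nil] at this; omega
    have hu' : u = [] := List.length_eq_zero_iff.1 this
    rw [hw, hu']
  | succ n ih =>
    intro w u v k hn hd e hu hm k' hk
    by_cases hw : w = []
    · have : u.length = 0 := by
        have := e.length; rw [hw, List.length_append, List.length_nil] at this; omega
      have hu' : u = [] := List.length_eq_zero_iff.1 this
      rw [hw, hu']
    obtain ⟨⟨t, ht⟩, hx, hl, hc⟩ := Th1_max hd e hu hm
    have h1 := X_len w
    have h2 := ll_pos w hw
    have h3 := ih (by omega) (X_red hd) ht hx hl k' hk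
    rw [Th1 k' hd, Th1 k' (hd.eqv e).pre, h3]
    congr 1
    unfold rk
    rw [rk_eq hd e hu hc, List.countP_filter]
    apply List.countP_congr
    intro a _
    simp
    omega

theorem Th3 {w u v : List ℤ} {k : ℤ} (i : ℕ) (hd : Red w) (e : Eqv w (u ++ v))
    (hu : ∀ c ∈ u, k < c) (hm : u.length = M w k) :
    ll (X^[i] u) = rk k (X^[i] w) := by
  induction i generalizing w u v with
  | zero =>
    obtain ⟨_, _, _, hc⟩ := Th1_max hd e hu hm
    simpa [ll_cc (hd.eqv e).pre] using hc
  | succ i ih =>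
    obtain ⟨⟨t, ht⟩, hx, hl, hc⟩ := Th1_max hd e hu hm
    exact ih (X_red hd) ht hx hl

end YZ

namespace YZ

def sh (w : List ℤ) (i : ℕ) : ℕ := (rw' (bt^[i] w)).length

theorem sh_zero (w : List ℤ) : sh w 0 = (rw' w).length := rfl
theorem sh_succ (w : List ℤ) (i : ℕ) : sh w (i + 1) = sh (bt w) i := rfl

theorem sh_eqv {w w' : List ℤ} (hd : Red w) (e : Eqv w w') (i : ℕ) : sh w i = sh w' i := by
  induction i generalizing w w' with
  | zero => rw [sh_zero, sh_zero, (inv e hd).1]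
  | succ i ih => exact ih (bt_red hd) (inv e hd).2

inductive Col : List ℤ → ℤ → ℕ → Prop
  | zero (w : List ℤ) (x : ℤ) (h : (ins x (rw' w)).2 = none) : Col w x 0
  | succ (w : List ℤ) (x z : ℤ) (i : ℕ) (h : (ins x (rw' w)).2 = some z) (h' : Col (bt w) z i) :
      Col w x (i + 1)

theorem col_ex (n : ℕ) : ∀ (w : List ℤ) (x : ℤ), w.length ≤ n → ∃ i, Col w x i := by
  induction n with
  | zero =>
    intro w x h
    have hw : w = [] := List.length_eq_zero_iff.1 (by omega)
    subst hw
    exact ⟨0, Col.zero _ _ rfl⟩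
  | succ n ih =>
    intro w x h
    cases hb : (ins x (rw' w)).2 with
    | none => exact ⟨0, Col.zero _ _ hb⟩
    | some z =>
      have h1 := bt_len w
      have h2 : 0 < (rw' w).length := by
        cases hr : rw' w with
        | nil => rw [hr] at hb; simp [ins] at hb
        | cons a r => simp
      obtain ⟨i, hi⟩ := ih (bt w) z (by omega)
      exact ⟨i + 1, Col.succ _ _ _ _ hb hi⟩

theorem sh_col {w : List ℤ} {x : ℤ} {i : ℕ} (h : Col w x i) (j : ℕ) :
    sh (w ++ [x]) j = sh w j + if j = i then 1 else 0 := by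
  induction h generalizing j with
  | zero w x h =>
    have hl := ins_len x (rw' w)
    rw [h] at hl
    cases j with
    | zero => rw [sh_zero, sh_zero, rw_snoc]; simpa using hl
    | succ j => rw [sh_succ, sh_succ, bt_snoc, h]; simp
  | succ w x z i h h' ih =>
    have hl := ins_len x (rw' w)
    rw [h] at hl
    cases j with
    | zero => rw [sh_zero, sh_zero, rw_snoc]; simpa using hl
    | succ j =>
      rw [sh_succ, sh_succ, bt_snoc, h]
      have := ih j
      simpa using this

theorem col_mono {w : List ℤ} {x y : ℤ} {i j : ℕ} (hxy : y < x) (h : Col w x i)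
    (h' : Col (w ++ [x]) y j) : i < j := by
  induction h generalizing y j with
  | zero w x h =>
    cases h' with
    | zero _ _ g =>
      obtain ⟨z, hz, _⟩ := ins_bump_le y (rw' (w ++ [x])) (rw_inc _) x
        (by rw [rw_snoc]; exact mem_ins _ _) hxy
      rw [hz] at g; cases g
    | succ _ _ _ _ _ _ => omega
  | succ w x z i h h1 ih =>
    obtain ⟨z', hz, hle⟩ := ins_bump_le y (rw' (w ++ [x])) (rw_inc _) x
        (by rw [rw_snoc]; exact mem_ins _ _) hxy
    cases h' with
    | zero _ _ g => rw [hz] at g; cases g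
    | succ _ _ z2 j g g' =>
      rw [hz] at g
      obtain rfl := Option.some.inj g
      rw [bt_snoc, h] at g'
      have h2 := ins_bump_gt _ _ _ h
      have := ih (by omega) g'
      omega

theorem red_row {w : List ℤ} {x : ℤ} (h : Red (w ++ [x])) : Red (rw' w ++ [x]) := by
  have := h.eqv ((bt_eqv w h.pre).right [x])
  rw [List.append_assoc] at this
  exact this.suf

theorem col_inj {w w' : List ℤ} {x x' : ℤ} {i : ℕ} (h : Col w x i) (h' : Col w' x' i)
    (hd : Red (w ++ [x])) (e : Eqv (w ++ [x]) (w' ++ [x'])) : Eqv w w' ∧ x = x' := by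
  have fin : ∀ w w' : List ℤ, Red w → Red w' → Eqv (bt w) (bt w') → rw' w = rw' w' →
      Eqv w w' := by
    intro w w' h1 h2 e1 e2
    refine (bt_eqv w h1).trans (Eqv.trans ?_ (bt_eqv w' h2).symm)
    rw [e2]; exact e1.right _
  induction h generalizing w' x' with
  | zero w x h =>
    cases h' with
    | zero _ _ g =>
      have I := inv e hd
      rw [rw_snoc, rw_snoc, ins_none _ _ h, ins_none _ _ g, bt_snoc, bt_snoc, h, g] at I
      simp only [Option.toList_none, List.append_nil] at I
      have I1 := List.append_inj' I.1 rfl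
      exact ⟨fin w w' hd.pre (hd.eqv e).pre I.2 I1.1, by simpa using I1.2⟩
  | succ w x z i h h1 ih =>
    cases h' with
    | succ _ _ z' _ g g' =>
      have I := inv e hd
      have hb := bt_red hd
      rw [bt_snoc, h] at hb
      rw [rw_snoc, rw_snoc, bt_snoc, bt_snoc, h, g] at I
      simp only [Option.toList_some] at I hb
      obtain ⟨q1, q2⟩ := ih g' hb I.2
      subst q2
      obtain ⟨q3, q4⟩ := ins_inj _ _ x x' z (rw_inc w) (rw_inc w') (red_row hd)
        (red_row (hd.eqv e)) I.1 h g
      exact ⟨fin w w' hd.pre (hd.eqv e).pre q1 q3, q4⟩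

theorem sh_above (U v : List ℤ) (x : ℤ) (i : ℕ) (hv : (v ++ [x]).Pairwise (· > ·))
    (h : Col (U ++ v) x i) (j : ℕ) (hj : i < j) : sh (U ++ (v ++ [x])) j = sh U j := by
  induction v using List.reverseRecOn generalizing x i with
  | nil =>
    have := sh_col h j
    simp only [List.append_nil, List.nil_append] at this ⊢
    rw [this, if_neg (by omega)]; rfl
  | append_singleton v y ih =>
    obtain ⟨i0, h0⟩ := col_ex _ (U ++ v) y le_rfl
    have hp := List.pairwise_append.1 hv
    have hxy : x < y := hp.2.2 y (by simp) x (by simp)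
    have h1 := col_mono hxy h0 (by simpa using h)
    have h2 := ih y i0 hp.1 h0 (by omega)
    have h3 := sh_col h j
    rw [if_neg (by omega)] at h3
    rw [← List.append_assoc, h3, h2]; rfl

theorem sh_mono (U v : List ℤ) (j : ℕ) : sh U j ≤ sh (U ++ v) j := by
  induction v using List.reverseRecOn with
  | nil => simp
  | append_singleton v y ih =>
    obtain ⟨i0, h0⟩ := col_ex _ (U ++ v) y le_rfl
    rw [← List.append_assoc, sh_col h0 j]; omega

theorem lemR_neg (v : List ℤ) : ∀ (U U2 v2 : List ℤ) (_ : Red (U ++ v))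
    (_ : Eqv (U ++ v) (U2 ++ v2)) (_ : v.length = v2.length) (_ : v.Pairwise (· > ·))
    (_ : v2.Pairwise (· > ·)) (_ : ∀ i, sh U i = sh U2 i), Eqv U U2 ∧ v = v2 := by
  induction v using List.reverseRecOn with
  | nil =>
    intro U U2 v2 hd e hl _ _ _
    have : v2 = [] := List.length_eq_zero_iff.1 (by simpa using hl.symm)
    subst this
    simpa using e
  | append_singleton v x ih =>
    intro U U2 v2 hd e hl p1 p2 hs
    rcases List.eq_nil_or_concat v2 with h | ⟨v', x', h⟩
    · subst h; simp at hl
    rw [List.concat_eq_append] at h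
    subst h
    obtain ⟨i, hi⟩ := col_ex _ (U ++ v) x le_rfl
    obtain ⟨i', hi'⟩ := col_ex _ (U2 ++ v') x' le_rfl
    have key : ∀ j, sh (U ++ (v ++ [x])) j = sh (U2 ++ (v' ++ [x'])) j := sh_eqv hd e
    have b1 : sh U i < sh (U ++ (v ++ [x])) i := by
      rw [← List.append_assoc, sh_col hi i, if_pos rfl]
      have := sh_mono U v i; omega
    have b2 : sh U2 i' < sh (U2 ++ (v' ++ [x'])) i' := by
      rw [← List.append_assoc, sh_col hi' i', if_pos rfl]
      have := sh_mono U2 v' i'; omega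
    have hii : i = i' := by
      rcases lt_trichotomy i i' with h | h | h
      · have := sh_above U v x i p1 hi i' h
        rw [key, hs] at this; omega
      · exact h
      · have := sh_above U2 v' x' i' p2 hi' i h
        rw [← key, ← hs] at this; omega
    subst hii
    rw [← List.append_assoc] at e hd
    rw [← List.append_assoc] at e
    obtain ⟨e1, hx⟩ := col_inj hi hi' hd e
    subst hx
    obtain ⟨e2, e3⟩ := ih U U2 v' hd.pre e1 (by simpa using hl)
      (List.pairwise_append.1 p1).1 (List.pairwise_append.1 p2).1 hs
    exact ⟨e2, by rw [e3]⟩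

theorem X_iter (i : ℕ) (u : List ℤ) : X^[i] u = neg (bt^[i] (neg u)) := by
  induction i generalizing u with
  | zero => simp [neg_neg']
  | succ i ih =>
    rw [Function.iterate_succ_apply, ih, Function.iterate_succ_apply]
    simp only [X, neg_neg']

theorem ll_sh (i : ℕ) (u : List ℤ) : ll (X^[i] u) = sh (neg u) i := by
  rw [X_iter, ll, neg_neg']; rfl

theorem lemR (U U2 v v2 : List ℤ) (hd : Red (U ++ v))
    (e : Eqv (U ++ v) (U2 ++ v2)) (hl : v.length = v2.length) (h1 : Inc v) (h2 : Inc v2)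
    (hs : ∀ i, ll (X^[i] U) = ll (X^[i] U2)) : Eqv U U2 ∧ v = v2 := by
  have f : ∀ v : List ℤ, Inc v → (neg v).Pairwise (· > ·) := by
    intro v h
    unfold neg
    rw [List.pairwise_map]
    exact h.imp (by intro a b h; omega)
  have e' := e.neg
  have hd' := hd.neg
  rw [neg_app] at e' hd'
  rw [neg_app] at e'
  obtain ⟨q1, q2⟩ := lemR_neg (neg v) (neg U) (neg U2) (neg v2) hd' e'
    (by simpa [neg_len] using hl) (f v h1) (f v2 h2) (by simpa only [ll_sh] using hs)
  have q1 := q1.neg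
  rw [neg_neg', neg_neg'] at q1
  have q2 := congrArg neg q2
  rw [neg_neg', neg_neg'] at q2
  exact ⟨q1, q2⟩

/-! Flag words -/

def Flag (w y : List ℤ) : Prop := Eqv w y ∧ ∀ k, ∀ c ∈ y.take (M w k), k < c

theorem flag_ex (n : ℕ) : ∀ (k : ℤ) (w : List ℤ), Red w → (∀ c ∈ w, k < c ∧ c ≤ k + n) →
    ∃ y, Flag w y := by
  induction n with
  | zero =>
    intro k w _ h
    have : w = [] := by
      cases w with
      | nil => rfl
      | cons a w => have := h a (by simp); simp at this; omega
    subst this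
    exact ⟨[], Eqv.refl _, by simp⟩
  | succ n ih =>
    intro k w hd h
    obtain ⟨u, v, e, hl, hu⟩ := M_spec w (k + 1)
    obtain ⟨y, e1, hy⟩ := ih (k + 1) u (hd.eqv e).pre (by
      intro c hc
      have h1 := (e.mem c).2 (by simp [hc])
      have h2 := h c h1
      have h3 := hu c hc
      push_cast at h2
      omega)
    have ey : Eqv w (y ++ v) := e.trans (e1.right v)
    refine ⟨y ++ v, ey, ?_⟩
    intro k' c hc
    by_cases hk : k + 1 ≤ k'
    · have t := Th2 _ le_rfl hd e hu hl k' hk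
      have t2 := M_le_len u k'
      rw [e1.length] at t2
      rw [← t, List.take_append_of_le_length t2] at hc
      exact hy k' c hc
    · have := (ey.mem c).2 (List.mem_of_mem_take hc)
      have := h c this
      omega

theorem bounds (w : List ℤ) : ∃ (k : ℤ) (n : ℕ), ∀ c ∈ w, k < c ∧ c ≤ k + n := by
  induction w with
  | nil => exact ⟨0, 0, by simp⟩
  | cons a w ih =>
    obtain ⟨k, n, h⟩ := ih
    refine ⟨min k (a - 1), (max (k + n) a - min k (a - 1)).toNat, ?_⟩
    intro c hc
    have : min k (a - 1) ≤ a - 1 := min_le_right _ _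
    have : min k (a - 1) ≤ k := min_le_left _ _
    have : a ≤ max (k + n) a := le_max_right _ _
    have : k + n ≤ max (k + n) a := le_max_left _ _
    rcases List.mem_cons.1 hc with h1 | h1
    · omega
    · have := h c h1; omega

theorem bt_gt (k : ℤ) (v : List ℤ) (h : ∀ c ∈ v, k < c) : ∀ z ∈ bt v, k + 1 < z := by
  induction v using List.reverseRecOn with
  | nil => simp [bt, insL]
  | append_singleton v x ih =>
    intro z hz
    rw [bt_snoc] at hz
    rcases List.mem_append.1 hz with h1 | h1
    · exact ih (fun c hc => h c (by simp [hc])) z h1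
    · have h2 := ins_bump_gt x (rw' v) z (by simpa using h1)
      have := h x (by simp)
      omega

theorem bt_nil (v : List ℤ) (h : bt v = []) : rw' v = v := by
  induction v using List.reverseRecOn with
  | nil => rfl
  | append_singleton v x ih =>
    rw [bt_snoc] at h
    have h1 := List.append_eq_nil_iff.1 h
    have h2 : (ins x (rw' v)).2 = none := by simpa using h1.2
    rw [rw_snoc, ins_none _ _ h2, ih h1.1]

theorem seg_inc {w y : List ℤ} (hd : Red w) (hf : Flag w y) (k : ℤ) :
    Inc ((y.take (M w k)).drop (M w (k + 1))) := by
  have hab : M w (k + 1) ≤ M w k := M_anti w (by omega)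
  set v := (y.take (M w k)).drop (M w (k + 1)) with hv
  set U := y.take (M w (k + 1)) with hU
  have hUv : y.take (M w k) = U ++ v := by
    rw [← List.take_append_drop (M w (k + 1)) (y.take (M w k)), List.take_take, min_eq_left hab]
  have hy : y = U ++ v ++ y.drop (M w k) := by
    rw [← hUv, List.take_append_drop]
  have ry : Red y := hd.eqv hf.1
  rw [hy] at ry
  have rv : Red v := ry.pre.suf
  cases hb : bt v with
  | nil => rw [← bt_nil v hb]; exact rw_inc v
  | cons z t =>
    exfalso
    have hz := bt_gt k v (fun c hc => hf.2 k c (by rw [hUv]; simp [hc])) z (by simp [hb])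
    have e1 := bt_eqv v rv
    rw [hb] at e1
    have e2 : Eqv w ((U ++ [z]) ++ (t ++ rw' v ++ y.drop (M w k))) := by
      have := (e1.ctx U (y.drop (M w k)))
      rw [← hy] at this
      simpa using hf.1.trans this
    have := M_ge (k := k + 1) e2 (by
      intro c hc
      rcases List.mem_append.1 hc with h | h
      · exact hf.2 (k + 1) c h
      · rw [List.mem_singleton.1 h]; exact hz)
    rw [List.length_append, hU, List.length_take, ← hf.1.length,
      min_eq_left (M_le_len _ _)] at this
    simp at this

theorem flag_split {w y : List ℤ} (k : ℤ) :
    y.take (M w k) = y.take (M w (k + 1)) ++ (y.take (M w k)).drop (M w (k + 1)) := by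
  have hab : M w (k + 1) ≤ M w k := M_anti w (by omega)
  have := (List.take_append_drop (M w (k + 1)) (y.take (M w k))).symm
  rwa [List.take_take, min_eq_left hab] at this

theorem flag_unique {w y y' : List ℤ} (hd : Red w) (h : Flag w y) (h' : Flag w y') : y = y' := by
  obtain ⟨k, n, hb⟩ := bounds w
  have M0 : M w k = w.length :=
    le_antisymm (M_le_len _ _) (M_ge (v := []) (by simpa using Eqv.refl w) (fun c hc => (hb c hc).1))
  have Mn : M w (k + n) = 0 := by
    obtain ⟨u, v, e, hl, hu⟩ := M_spec w (k + n)
    rw [← hl]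
    cases u with
    | nil => rfl
    | cons a u =>
      have h1 := hu a (by simp)
      have h2 := hb a ((e.mem a).2 (by simp))
      omega
  have P : ∀ m : ℕ, Eqv (y.take (M w (k + m))) (y'.take (M w (k + m))) ∧
      (y.take (M w (k + m)) = y'.take (M w (k + m)) → y = y') := by
    intro m
    induction m with
    | zero =>
      have e1 : y.take (M w (k + (0 : ℕ))) = y := by
        apply List.take_of_length_le; simp [M0, h.1.length]
      have e2 : y'.take (M w (k + (0 : ℕ))) = y' := by
        apply List.take_of_length_le; simp [M0, h'.1.length]
      rw [e1, e2]
      exact ⟨h.1.symm.trans h'.1, id⟩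
    | succ m ih =>
      obtain ⟨ie, iy⟩ := ih
      have hk : k + ((m + 1 : ℕ) : ℤ) = k + m + 1 := by push_cast; ring
      rw [hk]
      set K := k + (m : ℤ) with hK
      have len : ∀ z, Flag w z → (z.take (M w (K + 1))).length = M w (K + 1) := by
        intro z hz
        rw [List.length_take, ← hz.1.length, min_eq_left (M_le_len _ _)]
      have shp : ∀ z, Flag w z → ∀ i, ll (X^[i] (z.take (M w (K + 1)))) = rk (K + 1) (X^[i] w) := by
        intro z hz i
        exact Th3 (v := z.drop (M w (K + 1))) i hd (by rw [List.take_append_drop]; exact hz.1)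
          (hz.2 (K + 1)) (len z hz)
      have sp : y.take (M w K) = _ := flag_split K
      have sp' : y'.take (M w K) = _ := flag_split K
      have rd : Red (y.take (M w K)) :=
        Red.pre (t := y.drop (M w K)) (by rw [List.take_append_drop]; exact hd.eqv h.1)
      have R := lemR (y.take (M w (K + 1))) (y'.take (M w (K + 1)))
        ((y.take (M w K)).drop (M w (K + 1))) ((y'.take (M w K)).drop (M w (K + 1)))
        (by rw [← sp]; exact rd) (by rw [← sp, ← sp']; exact ie)
        (by simp [← h.1.length, ← h'.1.length]) (seg_inc hd h K) (seg_inc hd h' K)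
        (fun i => by rw [shp y h i, shp y' h' i])
      refine ⟨R.1, fun e => iy ?_⟩
      rw [sp, sp', R.2, e]
  apply (P n).2
  rw [Mn]; simp

theorem flag_exists {w : List ℤ} (hd : Red w) : ∃ y, Flag w y := by
  obtain ⟨k, n, hb⟩ := bounds w
  exact flag_ex n k w hd hb

end YZ

namespace YZ
open EG

def hv : Option ℤ → ℤ → ℤ
  | none, r => r
  | some p, r => min r (p - 1)

def hm : Option ℤ → List ℤ → List ℤ
  | _, [] => []
  | o, r :: L => hv o r :: hm (some (hv o r)) L

theorem hatMins_hm (L : List ℤ) : hatMins L = hm none L := by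
  have key : ∀ (L A : List ℤ) (o : Option ℤ),
      (L.foldl (fun (acc : List ℤ × Option ℤ) r =>
        let v := match acc.2 with
          | none => r
          | some p => min r (p - 1)
        (acc.1 ++ [v], some v)) (A, o)).1 = A ++ hm o L := by
    intro L
    induction L with
    | nil => intro A o; simp [hm]
    | cons r L ih =>
      intro A o
      rw [List.foldl_cons, ih]
      cases o <;> simp [hm, hv]
  exact key L [] none

theorem hm_lt (p : ℤ) (L : List ℤ) : ∀ h ∈ hm (some p) L, h < p := by
  induction L generalizing p with
  | nil => simp [hm]
  | cons r L ih =>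
    have h1 : hv (some p) r < p := by simp only [hv]; omega
    intro h hh
    simp only [hm, List.mem_cons] at hh
    rcases hh with hh | hh
    · omega
    · have := ih _ h hh; omega

theorem hm_dec (o : Option ℤ) (L : List ℤ) : (hm o L).Pairwise (· > ·) := by
  induction L generalizing o with
  | nil => simp [hm]
  | cons r L ih =>
    simp only [hm, List.pairwise_cons]
    exact ⟨fun a ha => hm_lt _ _ a ha, ih _⟩

theorem hm_len (o : Option ℤ) (L : List ℤ) : (hm o L).length = L.length := by
  induction L generalizing o with
  | nil => simp [hm]
  | cons r L ih => simp [hm, ih]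

def gZ (Z : List (ℤ × ℕ)) (p : ℕ) : ℕ :=
  match Z.find? (fun q => decide (q.1 = (p : ℤ) + 1)) with
    | some q => q.2
    | none => 0

theorem gZ_cons (h : ℤ) (l : ℕ) (Z : List (ℤ × ℕ)) (hZ : ∀ q ∈ Z, q.1 < h) (p : ℕ) :
    gZ ((h, l) :: Z) p = (if h = (p : ℤ) + 1 then l else 0) + gZ Z p := by
  by_cases hp : h = (p : ℤ) + 1
  · have : gZ Z p = 0 := by
      unfold gZ
      have : Z.find? (fun q => decide (q.1 = (p : ℤ) + 1)) = none := by
        rw [List.find?_eq_none]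
        intro q hq
        have := hZ q hq
        simp; omega
      rw [this]
    rw [this, if_pos hp]
    simp [gZ, hp]
  · rw [if_neg hp]
    simp [gZ, hp]

theorem ind_sum (h : ℤ) (l K : ℕ) (h0 : 0 < h) :
    ((List.range K).map (fun p => if h = ((p : ℕ) : ℤ) + 1 then l else 0)).sum
      = if h ≤ K then l else 0 := by
  induction K with
  | zero => simp; omega
  | succ K ih =>
    rw [List.range_succ, List.map_append, List.sum_append, ih]
    simp only [List.map_cons, List.map_nil, List.sum_cons, List.sum_nil, add_zero]
    push_cast
    split_ifs <;> omega

theorem build_sum (Z : List (ℤ × ℕ)) (K : ℕ) (hZ : Z.Pairwise (fun a b => a.1 > b.1))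
    (hp : ∀ q ∈ Z, 0 < q.1) :
    ((List.range K).map (gZ Z)).sum = (Z.map (fun q => if q.1 ≤ (K : ℤ) then q.2 else 0)).sum := by
  induction Z with
  | nil =>
    have : gZ [] = fun _ => 0 := by funext p; simp [gZ]
    rw [this]; simp
  | cons q Z ih =>
    obtain ⟨h, l⟩ := q
    have h' := List.pairwise_cons.1 hZ
    have e : gZ ((h, l) :: Z) = fun p => (if h = ((p : ℕ) : ℤ) + 1 then l else 0) + gZ Z p := by
      funext p; exact gZ_cons h l Z (fun q hq => h'.1 q hq) p
    rw [e, List.sum_map_add, ih h'.2 (fun q hq => hp q (by simp [hq])),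
      ind_sum h l K (hp (h, l) (by simp))]
    simp

def hd0 (A : List ℕ) : ℤ := ((A.headD 0 : ℕ) : ℤ)

def TT : Option ℤ → List (List ℕ) → ℤ → ℕ
  | _, [], _ => 0
  | o, A :: R, k => (if hv o (hd0 A) ≤ k then A.length else 0) + TT (some (hv o (hd0 A))) R k

theorem TT_eq (o : Option ℤ) (R : List (List ℕ)) (k : ℤ) :
    (((hm o (R.map hd0)).zip (R.map List.length)).map
      (fun q => if q.1 ≤ k then q.2 else 0)).sum = TT o R k := by
  induction R generalizing o with
  | nil => simp [hm, TT]
  | cons A R ih =>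
    simp only [List.map_cons, hm, List.zip_cons_cons, List.sum_cons, TT, ih]

theorem des_unfold (σ : List ℕ) : desWord σ =
    if hm none ((runs σ).map hd0) = [] then some []
    else if (hm none ((runs σ).map hd0)).getLastD 0 ≤ 0 then none
    else some (buildWeakComp (hm none ((runs σ).map hd0)) ((runs σ).map List.length)) := by
  unfold desWord desFromBlocks
  simp only [hatMins_hm]
  rfl

theorem zip_fst_dec : ∀ (a : List ℤ) (b : List ℕ), a.Pairwise (· > ·) →
    (a.zip b).Pairwise (fun a b => a.1 > b.1)
  | [], _, _ => by simp
  | _ :: _, [], _ => by simp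
  | x :: a, y :: b, h => by
    have h' := List.pairwise_cons.1 h
    simp only [List.zip_cons_cons, List.pairwise_cons]
    refine ⟨?_, zip_fst_dec a b h'.2⟩
    rintro ⟨p, q⟩ hq
    exact h'.1 p (List.of_mem_zip hq).1

theorem des_pos (σ : List ℕ) (d : List ℕ) (h : desWord σ = some d) :
    ∀ x ∈ hm none ((runs σ).map hd0), 0 < x := by
  rw [des_unfold] at h
  have hdec := hm_dec none ((runs σ).map hd0)
  generalize hm none ((runs σ).map hd0) = H at *
  split_ifs at h with h1 h2
  · simp [h1]
  · intro x hx
    rcases List.eq_nil_or_concat H with h3 | ⟨l, y, h3⟩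
    · exact absurd h3 h1
    · rw [List.concat_eq_append] at h3
      subst h3
      simp at h2
      rcases List.mem_append.1 hx with h4 | h4
      · have := (List.pairwise_append.1 hdec).2.2 x h4 y (by simp); omega
      · simp at h4; omega

theorem des_some (σ : List ℕ) (h : ∀ x ∈ hm none ((runs σ).map hd0), 0 < x) :
    ∃ d, desWord σ = some d := by
  rw [des_unfold]
  generalize hm none ((runs σ).map hd0) = H at *
  split_ifs with h1 h2
  · exact ⟨_, rfl⟩
  · exfalso
    rcases List.eq_nil_or_concat H with h3 | ⟨l, y, h3⟩
    · exact h1 h3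
    · rw [List.concat_eq_append] at h3
      subst h3
      simp at h2
      have := h y (by simp)
      omega
  · exact ⟨_, rfl⟩

theorem des_sum (σ : List ℕ) (d : List ℕ) (h : desWord σ = some d) (k : ℕ) :
    (d.take k).sum = TT none (runs σ) k := by
  have hp := des_pos σ d h
  rw [← TT_eq]
  rw [des_unfold] at h
  have hdec := hm_dec none ((runs σ).map hd0)
  generalize hm none ((runs σ).map hd0) = H at *
  generalize (runs σ).map List.length = N at *
  split_ifs at h with h1 h2
  · simp at h; subst h; subst h1; simp
  · simp only [Option.some.injEq] at h
    subst h
    have e : buildWeakComp H N = (List.range (H.headD 0).toNat).map (gZ (H.zip N)) := by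
      have e0 : ∀ l : List ℕ, (do let a ← l; pure ((a : ℕ) : ℤ)) = l.map (fun a : ℕ => (a : ℤ)) := by
        intro l
        induction l with
        | nil => rfl
        | cons a l ih => simpa using ih
      unfold buildWeakComp
      rw [e0, List.map_map]
      apply List.map_congr_left
      intro p _
      simp only [Function.comp, gZ]
      all_goals cases (H.zip N).find? (fun q => decide (q.1 = (p : ℤ) + 1)) <;> rfl
    rw [e, ← List.map_take, List.take_range,
      build_sum _ _ (zip_fst_dec H N hdec) (fun q hq => hp _ (List.of_mem_zip hq).1)]
    congr 1
    apply List.map_congr_left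
    rintro ⟨x, l⟩ hq
    have hx := (List.of_mem_zip hq).1
    have hx0 := hp x hx
    have : x ≤ H.headD 0 := by
      cases H with
      | nil => simp at hx
      | cons a H =>
        have := List.pairwise_cons.1 hdec
        rcases List.mem_cons.1 hx with h5 | h5
        · simp [h5]
        · have := this.1 x h5; simp; omega
    have q : (x ≤ ((min k (H.headD 0).toNat : ℕ) : ℤ)) ↔ x ≤ k := by
      push_cast
      omega
    simp only [q]

/-! runs -/

def Brk (A B : List ℕ) : Prop := ∃ A' a b B', A = A' ++ [a] ∧ B = b :: B' ∧ b ≤ a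

theorem runs_ok (σ : List ℕ) : (runs σ).flatten = σ ∧
    (∀ A ∈ runs σ, A ≠ [] ∧ A.Pairwise (· < ·)) ∧ (runs σ).IsChain Brk := by
  unfold runs
  induction σ with
  | nil => simp [splitWhen]
  | cons a σ ih =>
    cases σ with
    | nil => simp [splitWhen]
    | cons b rest =>
      obtain ⟨i1, i2, i3⟩ := ih
      simp only [splitWhen]
      generalize splitWhen (fun a b => decide (b ≤ a)) (b :: rest) = R at *
      cases R with
      | nil => simp at i1
      | cons r rs =>
        have hr := i2 r (by simp)
        cases r with
        | nil => exact absurd rfl hr.1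
        | cons c r' =>
          have hcb : c = b ∧ r' ++ rs.flatten = rest := by simpa using i1
          obtain ⟨rfl, hrest⟩ := hcb
          by_cases hba : c ≤ a
          · simp only [hba, decide_true, if_true]
            refine ⟨by simp [hrest], ?_, ?_⟩
            · intro A hA
              rcases List.mem_cons.1 hA with h | h
              · subst h; simp
              · exact i2 A h
            · rw [List.isChain_cons_cons]
              exact ⟨⟨[], a, c, r', rfl, rfl, hba⟩, i3⟩
          · simp only [hba, decide_false]
            refine ⟨by simp [hrest], ?_, ?_⟩
            · intro A hA
              simp only [Bool.false_eq_true, if_false] at hA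
              rcases List.mem_cons.1 hA with h | h
              · subst h
                refine ⟨by simp, ?_⟩
                have h5 := List.pairwise_cons.1 hr.2
                rw [List.pairwise_cons]
                refine ⟨?_, hr.2⟩
                intro x hx
                rcases List.mem_cons.1 hx with h6 | h6
                · omega
                · have := h5.1 x h6; omega
              · exact i2 A (by simp [h])
            · simp only [Bool.false_eq_true, if_false]
              cases rs with
              | nil => simp
              | cons B rs =>
                rw [List.isChain_cons_cons] at i3 ⊢
                obtain ⟨⟨A', x, y, B', e1, e2, e3⟩, i3⟩ := i3
                exact ⟨⟨a :: A', x, y, B', by simp [e1], e2, e3⟩, i3⟩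

theorem TT_le (o : Option ℤ) (R : List (List ℕ)) (k : ℤ) : TT o R k ≤ R.flatten.length := by
  induction R generalizing o with
  | nil => simp [TT]
  | cons A R ih =>
    have := ih (some (hv o (hd0 A)))
    simp only [TT, List.flatten_cons, List.length_append]
    split_ifs <;> omega

theorem TT_all (p k : ℤ) (h : p ≤ k) (R : List (List ℕ)) : TT (some p) R k = R.flatten.length := by
  induction R generalizing p with
  | nil => simp [TT]
  | cons A R ih =>
    have h1 : hv (some p) (hd0 A) ≤ k := by simp only [hv]; omega
    simp only [TT, List.flatten_cons, List.length_append, if_pos h1, ih _ h1]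

theorem hv_le (o : Option ℤ) (r : ℤ) : hv o r ≤ r := by
  cases o
  · exact le_refl _
  · exact min_le_left _ _

theorem D1 (k : ℤ) (R : List (List ℕ)) : ∀ (o : Option ℤ)
    (_ : ∀ A ∈ R, A ≠ [] ∧ A.Pairwise (· < ·)),
    ∀ c ∈ R.flatten.take (R.flatten.length - TT o R k), k < (c : ℤ) := by
  induction R with
  | nil => simp
  | cons A R ih =>
    intro o hA c hc
    have h1 := hv_le o (hd0 A)
    by_cases hk : hv o (hd0 A) ≤ k
    · simp only [TT, if_pos hk, TT_all _ _ hk, List.flatten_cons, List.length_append] at hc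
      simp at hc
    · have hT := TT_le (some (hv o (hd0 A))) R k
      simp only [TT, if_neg hk, List.flatten_cons, List.length_append, zero_add] at hc
      rw [show A.length + R.flatten.length - TT (some (hv o (hd0 A))) R k =
        A.length + (R.flatten.length - TT (some (hv o (hd0 A))) R k) by omega,
        List.take_length_add_append] at hc
      rcases List.mem_append.1 hc with h | h
      · have hAA := hA A (by simp)
        cases A with
        | nil => simp at h
        | cons a A =>
          have h5 := List.pairwise_cons.1 hAA.2
          have h6 : hd0 (a :: A) = a := by simp [hd0]
          rw [h6] at h1 hk
          rcases List.mem_cons.1 h with h | h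
          · subst h; omega
          · have := h5.1 c h; omega
      · exact ih _ (fun A h => hA A (by simp [h])) c h

theorem D2 (M : ℤ → ℕ) (y : List ℕ) (h1 : ∀ k, ∀ c ∈ y.take (M k), k < (c : ℤ))
    (h2 : ∀ k, ((y.take (M k)).drop (M (k + 1))).Pairwise (· < ·))
    (h3 : ∀ k, M k ≤ y.length) (h0 : M 0 = y.length) (R : List (List ℕ)) :
    ∀ (P : List ℕ) (o : Option ℤ), y = P ++ R.flatten →
      (∀ A ∈ R, A ≠ [] ∧ A.Pairwise (· < ·)) → R.IsChain Brk →
      (∀ p, o = some p → ∀ k, P.length < M k → k < p - 1) →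
      (∀ x ∈ hm o (R.map hd0), 0 < x) ∧
      ∀ k, TT o R k + (M k - P.length) ≤ R.flatten.length := by
  induction R with
  | nil =>
    intro P o hy _ _ _
    refine ⟨by simp [hm], fun k => ?_⟩
    have := h3 k
    rw [hy] at this
    simp only [TT, List.flatten_nil, List.append_nil] at *
    simp; omega
  | cons A R ih =>
    intro P o hy hA hch ho
    have hA1 := hA A (by simp)
    have hAl : 0 < A.length := List.length_pos_of_ne_nil hA1.1
    have key : ∀ k, P.length < M k → k < hv o (hd0 A) := by
      intro k hk
      have q1 : k < hd0 A := by
        cases A with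
        | nil => exact absurd rfl hA1.1
        | cons a A =>
          have := h1 k a (by
            rw [hy, show M k = P.length + (M k - P.length - 1 + 1) by omega,
              List.take_length_add_append]
            simp)
          simpa [hd0] using this
      cases o with
      | none => exact q1
      | some p =>
        have := ho p rfl k hk
        simp only [hv]; omega
    have hylen : y.length = P.length + A.length + R.flatten.length := by
      rw [hy]; simp; omega
    obtain ⟨r1, r2⟩ := ih (P ++ A) (some (hv o (hd0 A))) (by rw [hy]; simp)
      (fun A h => hA A (by simp [h])) hch.tail (by
        intro p hp k hk
        obtain rfl := Option.some.inj hp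
        rw [List.length_append] at hk
        by_cases hs : P.length < M (k + 1)
        · have := key (k + 1) hs; omega
        exfalso
        cases R with
        | nil =>
          have := h3 k
          simp at hylen; omega
        | cons B R =>
          rw [List.isChain_cons_cons] at hch
          obtain ⟨⟨A', a, b, B', e1, e2, hba⟩, _⟩ := hch
          have hp := h2 k
          have ey : y = (P ++ A') ++ (a :: b :: (B' ++ R.flatten)) := by
            rw [hy, e1, e2]; simp
          rw [e1] at hk hAl
          simp only [List.length_append, List.length_singleton] at hk
          rw [ey, show M k = (P ++ A').length + (M k - (P ++ A').length - 2 + 1 + 1) by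
              simp only [List.length_append]; omega,
            List.take_length_add_append, List.drop_append_of_le_length (by
              simp only [List.length_append]; omega), List.take_succ_cons, List.take_succ_cons] at hp
          have hp2 := (List.pairwise_append.1 hp).2.1
          have := (List.pairwise_cons.1 hp2).1 b (by simp)
          omega)
    constructor
    · intro x hx
      simp only [List.map_cons, hm, List.mem_cons] at hx
      rcases hx with hx | hx
      · rw [hx]
        apply key
        rw [h0]; omega
      · exact r1 x hx
    · intro k
      have q := r2 k
      have q' := TT_le (some (hv o (hd0 A))) R k
      rw [List.length_append] at q
      simp only [TT, List.flatten_cons, List.length_append]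
      by_cases hk : P.length < M k
      · have := key k hk
        rw [if_neg (by omega)]; omega
      · split_ifs <;> omega

end YZ

namespace YZ
open EG

def cz (σ : List ℕ) : List ℤ := List.map (fun i : ℕ => (i : ℤ)) σ
def tn (w : List ℤ) : List ℕ := List.map Int.toNat w
def Pos (w : List ℤ) : Prop := ∀ c ∈ w, 1 ≤ c

theorem tn_cz (σ : List ℕ) : tn (cz σ) = σ := by simp [tn, cz, Function.comp_def]
theorem cz_tn (w : List ℤ) (h : Pos w) : cz (tn w) = w := by
  induction w with
  | nil => rfl
  | cons a w ih =>
    have h1 := h a (by simp)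
    have h2 := ih (fun c hc => h c (by simp [hc]))
    have : ((a.toNat : ℕ) : ℤ) = a := by omega
    simp only [cz, tn, List.map_cons, List.cons.injEq] at *
    exact ⟨this, h2⟩
theorem cz_len (σ : List ℕ) : (cz σ).length = σ.length := by simp [cz]
theorem tn_len (σ : List ℤ) : (tn σ).length = σ.length := by simp [tn]
theorem cz_app (a b : List ℕ) : cz (a ++ b) = cz a ++ cz b := by simp [cz]
theorem cz_cons (a : ℕ) (b : List ℕ) : cz (a :: b) = (a : ℤ) :: cz b := by simp [cz]
theorem tn_app (a b : List ℤ) : tn (a ++ b) = tn a ++ tn b := by simp [tn]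
theorem tn_cons (a : ℤ) (b : List ℤ) : tn (a :: b) = a.toNat :: tn b := by simp [tn]
theorem cz_pos {σ : List ℕ} (h : ∀ i ∈ σ, 1 ≤ i) : Pos (cz σ) := by
  intro c hc
  simp only [cz, List.mem_map] at hc
  obtain ⟨i, hi, rfl⟩ := hc
  have := h i hi
  omega
theorem tn_pos {w : List ℤ} (h : Pos w) : ∀ i ∈ tn w, 1 ≤ i := by
  intro i hi
  simp only [tn, List.mem_map] at hi
  obtain ⟨c, hc, rfl⟩ := hi
  have := h c hc
  omega
theorem mem_cz {σ : List ℕ} {c : ℕ} (h : c ∈ σ) : (c : ℤ) ∈ cz σ := by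
  simp only [cz, List.mem_map]; exact ⟨c, h, rfl⟩

theorem toPerm_app (a b : List ℕ) : toPerm (a ++ b) = toPerm a * toPerm b := by simp [toPerm]
theorem toPerm_cons (a : ℕ) (b : List ℕ) : toPerm (a :: b) = Equiv.swap a (a + 1) * toPerm b := by
  simp [toPerm]

theorem sw_comm (m n : ℕ) (h : m + 1 < n) :
    Equiv.swap m (m + 1) * Equiv.swap n (n + 1) = Equiv.swap n (n + 1) * Equiv.swap m (m + 1) := by
  ext i
  simp only [Equiv.Perm.mul_apply, Equiv.swap_apply_def]
  split_ifs <;> omega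

theorem sw_br (m : ℕ) :
    Equiv.swap m (m + 1) * (Equiv.swap (m + 1) (m + 2) * Equiv.swap m (m + 1)) =
    Equiv.swap (m + 1) (m + 2) * (Equiv.swap m (m + 1) * Equiv.swap (m + 1) (m + 2)) := by
  ext i
  simp only [Equiv.Perm.mul_apply, Equiv.swap_apply_def]
  split_ifs <;> omega

theorem cox_inv {a b : List ℤ} (h : CEqv a b) : (Pos a ↔ Pos b) ∧ a.length = b.length ∧
    (Pos a → toPerm (tn a) = toPerm (tn b)) := by
  induction h with
  | rel a b h =>
    cases h with
    | cm p s x y h =>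
      refine ⟨?_, by simp, ?_⟩
      · simp only [Pos, List.mem_append, List.mem_cons]
        constructor <;> intro H c hc <;> apply H <;> tauto
      · intro H
        have h1 := H x (by simp)
        have h2 := H y (by simp)
        simp only [tn_app, tn_cons, toPerm_app, toPerm_cons]
        rw [← mul_assoc (Equiv.swap _ _) (Equiv.swap _ _) (toPerm (tn s)),
          sw_comm x.toNat y.toNat (by omega), mul_assoc]
    | br p s x =>
      refine ⟨?_, by simp, ?_⟩
      · simp only [Pos, List.mem_append, List.mem_cons]
        constructor <;> intro H c hc <;> apply H <;> tauto
      · intro H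
        have h1 := H x (by simp)
        have e : (x + 1).toNat = x.toNat + 1 := by omega
        simp only [tn_app, tn_cons, toPerm_app, toPerm_cons, e]
        have := sw_br x.toNat
        congr 1
        rw [← mul_assoc (Equiv.swap (x.toNat + 1) _) _ (toPerm (tn s)),
          ← mul_assoc (Equiv.swap (x.toNat) _) _ (toPerm (tn s)), this]
        simp only [mul_assoc]
  | refl a => exact ⟨Iff.rfl, rfl, fun _ => rfl⟩
  | symm a b _ ih => exact ⟨ih.1.symm, ih.2.1.symm, fun h => (ih.2.2 (ih.1.2 h)).symm⟩
  | trans a b c _ _ i1 i2 =>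
    exact ⟨i1.1.trans i2.1, i1.2.1.trans i2.2.1, fun h => (i1.2.2 h).trans (i2.2.2 (i1.1.1 h))⟩

theorem red_of {ρ : List ℕ} (h : IsReducedWord ρ) : Red (cz ρ) := by
  intro w' e p a s hw
  obtain ⟨h1, h2, h3⟩ := cox_inv e
  have hp := cz_pos h.1
  have hp' := h1.1 hp
  have h3 := h3 hp
  rw [tn_cz] at h3
  subst hw
  have := h.2 (tn (p ++ s)) (tn_pos (fun c hc => hp' c (by
    rcases List.mem_append.1 hc with h | h <;> simp [h]))) (by
    rw [h3]
    simp only [tn_app, tn_cons, toPerm_app, toPerm_cons]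
    congr 1
    rw [← mul_assoc, Equiv.swap_mul_self, one_mul])
  rw [tn_len] at this
  rw [cz_len] at h2
  simp at this h2
  omega

theorem reduced_eqv {ρ σ : List ℕ} (h : IsReducedWord ρ) (e : Eqv (cz ρ) (cz σ)) :
    IsReducedWord σ := by
  obtain ⟨h1, h2, h3⟩ := cox_inv e.cox
  have hp := cz_pos h.1
  have hp' := h1.1 hp
  have h3 := h3 hp
  rw [tn_cz, tn_cz] at h3
  rw [cz_len, cz_len] at h2
  refine ⟨?_, ?_⟩
  · have := tn_pos hp'
    rwa [tn_cz] at this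
  · intro τ ht e2
    rw [← h2]
    exact h.2 τ ht (e2.trans h3.symm)

theorem ckMove_at (P S : List ℕ) (a b c : ℕ) : ckMove (S.length + 2) (P ++ a :: b :: c :: S) =
    P ++ (ckTriple a b c).1 :: (ckTriple a b c).2.1 :: (ckTriple a b c).2.2 :: S := by
  have hp : (P ++ a :: b :: c :: S).length - (S.length + 2) - 1 = P.length := by
    simp only [List.length_append, List.length_cons]; omega
  unfold ckMove
  rw [if_pos ⟨by omega, by simp only [List.length_append, List.length_cons]; omega⟩]
  simp only [hp]
  have g0 : (P ++ a :: b :: c :: S).getD P.length 0 = a := by simp [List.getD]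
  have g1 : (P ++ a :: b :: c :: S).getD (P.length + 1) 0 = b := by
    simp [List.getD, List.getElem?_append_right]
  have g2 : (P ++ a :: b :: c :: S).getD (P.length + 2) 0 = c := by
    simp [List.getD, List.getElem?_append_right]
  rw [g0, g1, g2]
  simp [List.set_append_right]

theorem ckMove_eqv (i : ℕ) (ρ : List ℕ) (h : Red (cz ρ)) : Eqv (cz ρ) (cz (ckMove i ρ)) := by
  by_cases hi : 2 ≤ i ∧ i + 1 ≤ ρ.length
  · obtain ⟨P, S, a, b, c, hρ, hS⟩ : ∃ P S a b c, ρ = P ++ a :: b :: c :: S ∧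
        S.length + 2 = i := by
      have hl : (ρ.drop (ρ.length - i - 1)).length = i + 1 := by
        rw [List.length_drop]; omega
      have e := (List.take_append_drop (ρ.length - i - 1) ρ).symm
      generalize ρ.drop (ρ.length - i - 1) = D at *
      match D, hl with
      | a :: b :: c :: S, hl => exact ⟨_, S, a, b, c, e, by simp at hl; omega⟩
      | [], hl => simp at hl
      | [a], hl => simp at hl; omega
      | [a, b], hl => simp at hl; omega
    subst hS
    rw [hρ] at h ⊢
    rw [ckMove_at]
    unfold ckTriple
    simp only [cz_app, cz_cons] at h
    split_ifs with h1 h2 h3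
    · subst h1
      have hne : a ≠ b := by
        rintro rfl
        exact not_red_sq (cz P) _ _ h
      rcases Nat.lt_trichotomy b a with hb | hb | hb
      · by_cases hb' : a = b + 1
        · subst hb'
          simp only [cz_app, cz_cons]
          have := (Step.br (cz P) (cz S) b).eqv.symm
          push_cast
          exact this
        · exfalso
          refine h _ (Relation.EqvGen.symm _ _ (Relation.EqvGen.rel _ _
            (CStep.cm (cz P) ((a : ℤ) :: cz S) b a (by omega)))) (cz P ++ [(b : ℤ)]) a (cz S) ?_
          simp
      · omega
      · by_cases hb' : b = a + 1
        · subst hb'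
          simp only [cz_app, cz_cons]
          have := (Step.br (cz P) (cz S) a).eqv
          push_cast
          exact this
        · exfalso
          refine h _ (Relation.EqvGen.rel _ _
            (CStep.cm (cz P) ((a : ℤ) :: cz S) a b (by omega))) (cz P ++ [(b : ℤ)]) a (cz S) ?_
          simp
    · simp only [cz_app, cz_cons]
      rcases h2 with h2 | h2
      · exact (Step.k1 _ _ (b : ℤ) a c (by omega) (by omega)).eqv
      · exact (Step.k1 _ _ (c : ℤ) a b (by omega) (by omega)).eqv.symm
    · simp only [cz_app, cz_cons]
      rcases h3 with h2 | h2
      · exact (Step.k2 _ _ (b : ℤ) c a (by omega) (by omega)).eqv.symm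
      · exact (Step.k2 _ _ (a : ℤ) c b (by omega) (by omega)).eqv
    · exact Eqv.refl _
  · unfold ckMove
    rw [if_neg hi]
    exact Eqv.refl _

theorem ck_eqv {ρ σ : List ℕ} (h : Red (cz ρ)) (e : CKEquiv ρ σ) : Eqv (cz ρ) (cz σ) := by
  obtain ⟨ms, rfl⟩ := e
  induction ms generalizing ρ with
  | nil => exact Eqv.refl _
  | cons i ms ih =>
    have e1 := ckMove_eqv i ρ h
    exact e1.trans (ih (h.eqv e1))

theorem ck_trans {a b c : List ℕ} (h : CKEquiv a b) (h' : CKEquiv b c) : CKEquiv a c := by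
  obtain ⟨m, rfl⟩ := h
  obtain ⟨m', rfl⟩ := h'
  exact ⟨m ++ m', by rw [List.foldl_append]⟩

theorem ck_at (P S : List ℕ) (a b c x y z : ℕ) (h : ckTriple a b c = (x, y, z)) :
    CKEquiv (P ++ a :: b :: c :: S) (P ++ x :: y :: z :: S) := by
  refine ⟨[S.length + 2], ?_⟩
  simp only [List.foldl_cons, List.foldl_nil]
  rw [ckMove_at, h]

theorem eqv_ck {a b : List ℤ} (e : Eqv a b) : Pos a →
    CKEquiv (tn a) (tn b) ∧ CKEquiv (tn b) (tn a) := by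
  induction e with
  | rel a b h =>
    intro hp
    cases h with
    | k1 p s x y z h1 h2 =>
      have q1 := hp x (by simp)
      simp only [tn_app, tn_cons]
      refine ⟨ck_at _ _ _ _ _ _ _ _ ?_, ck_at _ _ _ _ _ _ _ _ ?_⟩
      · unfold ckTriple
        rw [if_neg (by omega), if_pos (by omega)]
      · unfold ckTriple
        rw [if_neg (by omega), if_pos (by omega)]
    | k2 p s x y z h1 h2 =>
      have q1 := hp x (by simp)
      simp only [tn_app, tn_cons]
      refine ⟨ck_at _ _ _ _ _ _ _ _ ?_, ck_at _ _ _ _ _ _ _ _ ?_⟩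
      · unfold ckTriple
        rw [if_neg (by omega), if_neg (by omega), if_pos (by omega)]
      · unfold ckTriple
        rw [if_neg (by omega), if_neg (by omega), if_pos (by omega)]
    | br p s x =>
      simp only [tn_app, tn_cons]
      exact ⟨ck_at _ _ _ _ _ _ _ _ (by simp [ckTriple]), ck_at _ _ _ _ _ _ _ _ (by simp [ckTriple])⟩
  | refl a => intro _; exact ⟨⟨[], rfl⟩, ⟨[], rfl⟩⟩
  | symm a b e ih =>
    intro hp
    exact (ih (fun c hc => hp c ((Eqv.mem e c).1 hc))).symm
  | trans a b c e1 e2 i1 i2 =>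
    intro hp
    have j1 := i1 hp
    have j2 := i2 (fun x hx => hp x ((Eqv.mem e1 x).2 hx))
    exact ⟨ck_trans j1.1 j2.1, ck_trans j2.2 j1.2⟩

theorem ck_of_eqv {ρ σ : List ℕ} (hp : Pos (cz ρ)) (e : Eqv (cz ρ) (cz σ)) : CKEquiv ρ σ := by
  have := (eqv_ck e hp).1
  rwa [tn_cz, tn_cz] at this

/-- prefix bound coming from the weak descent composition -/
theorem des_prefix {w : List ℤ} {σ : List ℕ} (e : Eqv w (cz σ)) (k : ℕ) :
    σ.length ≤ M w k + TT none (runs σ) k ∧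
    ∀ c ∈ σ.take (σ.length - TT none (runs σ) k), (k : ℤ) < c := by
  obtain ⟨r1, r2, r3⟩ := runs_ok σ
  have d1 := D1 k (runs σ) none r2
  rw [r1] at d1
  refine ⟨?_, d1⟩
  have := M_ge (k := k) (u := cz (σ.take (σ.length - TT none (runs σ) k)))
    (v := cz (σ.drop (σ.length - TT none (runs σ) k)))
    (by rw [← cz_app, List.take_append_drop]; exact e) (by
      intro c hc
      simp only [cz, List.mem_map] at hc
      obtain ⟨i, hi, rfl⟩ := hc
      exact d1 i hi)
  rw [cz_len, List.length_take] at this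
  omega

theorem flag_des {w : List ℤ} {σ : List ℕ} (hd : Red w) (hp : Pos w) (hf : Flag w (cz σ)) :
    ∃ d, desWord σ = some d ∧ ∀ k : ℕ, TT none (runs σ) k + M w k ≤ σ.length := by
  obtain ⟨r1, r2, r3⟩ := runs_ok σ
  have hl : w.length = σ.length := by rw [hf.1.length, cz_len]
  have := D2 (M w) σ (by
      intro k c hc
      apply hf.2 k
      have := mem_cz hc
      simpa [cz, List.map_take] using this) (by
      intro k
      have := seg_inc hd hf k
      rw [cz, ← List.map_take, ← List.map_drop, Inc, List.pairwise_map] at this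
      exact this.imp (by intro a b h; omega)) (by
      intro k; rw [← hl]; exact M_le_len w k) (by
      rw [← hl]
      exact le_antisymm (M_le_len _ _) (M_ge (v := []) (by simpa using Eqv.refl w)
        (fun c hc => by have := hp c hc; omega)))
    (runs σ) [] none (by simp [r1]) r2 r3 (by simp)
  obtain ⟨d, hdd⟩ := des_some σ this.1
  refine ⟨d, hdd, fun k => ?_⟩
  have := this.2 k
  rw [r1] at this
  simpa using this

theorem flag_yam {ρ σ : List ℕ} (h : IsReducedWord ρ) (hf : Flag (cz ρ) (cz σ)) : IsYam σ := by
  have hσ := reduced_eqv h hf.1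
  obtain ⟨d, hd, hM⟩ := flag_des (red_of h) (cz_pos h.1) hf
  refine ⟨hσ, d, hd, ?_⟩
  intro τ e hτ he k
  rw [des_sum _ _ hd, des_sum _ _ he]
  have e1 : Eqv (cz ρ) (cz τ) := hf.1.trans (ck_eqv (red_of hσ) hτ)
  have h1 := (des_prefix e1 k).1
  have h2 := hM k
  have h3 := hf.1.symm.trans e1
  have h4 := h3.length
  rw [cz_len, cz_len] at h4
  omega

theorem yam_flag {ρ σ : List ℕ} (h : IsReducedWord ρ) (e : Eqv (cz ρ) (cz σ)) (hy : IsYam σ) :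
    Flag (cz ρ) (cz σ) := by
  obtain ⟨hσ, d, hd, hmin⟩ := hy
  have hp := cz_pos h.1
  obtain ⟨y, hf⟩ := flag_exists (red_of h)
  have hyp : Pos y := fun c hc => hp c ((hf.1.mem c).2 hc)
  rw [← cz_tn y hyp] at hf
  set τ := tn y
  obtain ⟨d', hd', hM⟩ := flag_des (red_of h) hp hf
  have hdom := hmin τ d' (ck_of_eqv (cz_pos hσ.1) (e.symm.trans hf.1)) hd'
  refine ⟨e, ?_⟩
  intro k c hc
  have hlen : τ.length = σ.length := by
    have := (hf.1.symm.trans e).length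
    rwa [cz_len, cz_len] at this
  rcases lt_or_ge k 0 with hk | hk
  · have := cz_pos hσ.1 c (List.mem_of_mem_take hc)
    omega
  · obtain ⟨m, rfl⟩ := Int.eq_ofNat_of_zero_le hk
    have h1 := hdom m
    rw [des_sum _ _ hd, des_sum _ _ hd'] at h1
    have h2 := hM m
    have h3 : M (cz ρ) m ≤ σ.length - TT none (runs σ) m := by omega
    have hc2 : c ∈ List.map (fun i : ℕ => (i : ℤ)) (σ.take (M (cz ρ) m)) := by
      rw [List.map_take]; exact hc
    obtain ⟨i, hi, rfl⟩ := List.mem_map.1 hc2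
    exact (des_prefix e m).2 i (List.take_subset_take_left _ h3 hi)

theorem main (ρ : List ℕ) (h : IsReducedWord ρ) : ∃! σ, CKEquiv ρ σ ∧ IsYam σ := by
  have hp := cz_pos h.1
  have hd := red_of h
  obtain ⟨y, hf⟩ := flag_exists hd
  have hyp : Pos y := fun c hc => hp c ((hf.1.mem c).2 hc)
  have hf' := hf
  rw [← cz_tn y hyp] at hf'
  refine ⟨tn y, ⟨ck_of_eqv hp hf'.1, flag_yam h hf'⟩, ?_⟩
  rintro σ ⟨h1, h2⟩
  have := flag_unique hd (yam_flag h (ck_eqv hd h1) h2) hf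
  rw [← this, tn_cz]

end YZ


namespace EG

/-- Every Coxeter–Knuth equivalence class of reduced words for a
permutation `w` contains exactly one Yamanouchi reduced word. -/
theorem unique_yamanouchi_in_class (w : Equiv.Perm ℕ) (ρ : List ℕ)
    (h : ReducedWordFor ρ w) :
    ∃! σ, CKEquiv ρ σ ∧ IsYam σ := by
  exact YZ.main ρ h.1

end EG
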